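/- arXiv:1601.00506 — 4 statements merged into one kernel-verified Lean document; each statement's English description precedes it below -/
import Mathlib

section
/- For every path graph P on n ≥ 4 vertices, there exists a set F of exactly ⌈(n+2)/2⌉ unordered pairs of distinct vertices of P that are not edges of P such that every vertex of the graph P + F has degree at least 3. -/
/-!
A tree of maximum degree at most two is traversed by a longest path: a vertex adjacent to the path
but not on it would either extend it at an end or be a third neighbour of an interior vertex, so by
connectedness the path is spanning, and by acyclicity only consecutive vertices are adjacent
(`exists_path_enumeration`). This labels the vertices by `0, …, n - 1`.

With `m = ⌊n / 2⌋ ≥ 2`, take `F` to consist of the `m` pairs `{i, i + m}` for `i < m`, the pair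
`{0, n - 1}`, and, for odd `n`, also the pair `{1, n - 1}` (`chords`). All these pairs have label
difference at least two and they are distinct, which gives `⌈(n + 2) / 2⌉` non-edges. The pairs
`{i, i + m}` cover `0, …, 2m - 1`, hence all interior vertices, and each of the two ends lies in
two pairs of `F`.
-/

/-- The degree of a vertex `v` in a simple graph `G`, as the cardinality of its
neighbor set. -/
noncomputable def degN {V : Type*} (G : SimpleGraph V) (v : V) : ℕ :=
  (G.neighborSet v).ncard

/-- A finite simple graph is 3-vertex-connected if removing any set of at most two
vertices leaves a connected induced subgraph. -/
def ThreeConnected {V : Type*} [Fintype V] (G : SimpleGraph V) : Prop :=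
  ∀ S : Finset V, S.card ≤ 2 → (G.induce ((S : Set V)ᶜ)).Connected

lemma three_le_degN {V : Type*} [Finite V] {G : SimpleGraph V} {v a b c : V}
    (ha : G.Adj v a) (hb : G.Adj v b) (hc : G.Adj v c) (hab : a ≠ b) (hac : a ≠ c) (hbc : b ≠ c) :
    3 ≤ degN G v :=
  (Set.two_lt_ncard_iff (Set.toFinite _)).2 ⟨a, b, c, ha, hb, hc, hab, hac, hbc⟩

/-- In an acyclic graph, adjacent vertices of a path are consecutive on it, since paths between two
given vertices are unique. -/
lemma consecutive_of_adj {V : Type*} {P : SimpleGraph V} (hP : P.IsAcyclic) {u v : V}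
    {p : P.Walk u v} (hp : p.IsPath) {i j : ℕ} (hij : i < j) (hj : j ≤ p.length)
    (h : P.Adj (p.getVert i) (p.getVert j)) : j = i + 1 := by
  have hq : ((p.take j).drop i).IsPath := (hp.take j).drop i
  have h' : P.Adj ((p.take j).getVert i) (p.getVert j) := by
    rwa [SimpleGraph.Walk.take_getVert, Nat.min_eq_right hij.le]
  have := (hP.subsingleton_path _ _).elim ⟨_, hq⟩ (SimpleGraph.Path.singleton h')
  have := congrArg (fun r => r.1.length) this
  simp [SimpleGraph.Path.singleton] at this
  omega

lemma exists_longest_path {V : Type*} [Fintype V] [Nonempty V] (P : SimpleGraph V) :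
    ∃ (u v : V) (p : P.Walk u v), p.IsPath ∧
      ∀ (u' v' : V) (q : P.Walk u' v'), q.IsPath → q.length ≤ p.length := by
  classical
  let Q : ℕ → Prop := fun k => ∃ (u v : V) (p : P.Walk u v), p.IsPath ∧ p.length = k
  have h0 : Q 0 := ⟨Classical.arbitrary V, _, SimpleGraph.Walk.nil, by simp, rfl⟩
  obtain ⟨u, v, p, hp, hl⟩ := Nat.findGreatest_spec (P := Q) (Nat.zero_le (Fintype.card V)) h0
  refine ⟨u, v, p, hp, fun u' v' q hq => ?_⟩
  rw [hl]
  exact Nat.le_findGreatest hq.length_lt.le ⟨u', v', q, hq, rfl⟩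

/-- A tree of maximum degree at most two is a path: its vertices can be labelled bijectively by
`0, …, n - 1` so that adjacency means consecutive labels. Values of `f` beyond `n - 1` are
irrelevant. -/
lemma exists_path_enumeration {V : Type*} [Fintype V] (P : SimpleGraph V) (hP : P.IsTree)
    (hpath : ∀ v : V, degN P v ≤ 2) :
    ∃ f : ℕ → V, (∀ i j, i < Fintype.card V → j < Fintype.card V → f i = f j → i = j) ∧
      (∀ v, ∃ i < Fintype.card V, f i = v) ∧
      (∀ i, i + 1 < Fintype.card V → P.Adj (f i) (f (i + 1))) ∧
      (∀ i j, i < j → j < Fintype.card V → P.Adj (f i) (f j) → j = i + 1) := by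
  classical
  have := hP.connected.nonempty
  obtain ⟨u, v, p, hp, hmax⟩ := exists_longest_path P
  have hinj : ∀ i j, i ≤ p.length → j ≤ p.length → p.getVert i = p.getVert j → i = j :=
    fun i j hi hj h => hp.getVert_injOn hi hj h
  have hclosed : ∀ x y, P.Adj x y → x ∈ p.support → y ∈ p.support := by
    intro x y hxy hx
    by_contra hy
    obtain ⟨i, rfl, hi⟩ := SimpleGraph.Walk.mem_support_iff_exists_getVert.1 hx
    have hne : ∀ j, p.getVert j ≠ y := fun j h => hy (h ▸ p.getVert_mem_support j)
    rcases Nat.eq_zero_or_pos i with rfl | hpos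
    · rw [SimpleGraph.Walk.getVert_zero] at hxy
      have := hmax _ _ _ (hp.cons hy (h := hxy.symm))
      simp at this
    rcases hi.eq_or_lt with rfl | hlt
    · rw [SimpleGraph.Walk.getVert_length] at hxy
      have := hmax _ _ _ (hp.concat hy hxy)
      simp at this
    · have h1 := p.adj_getVert_succ hlt
      have h2 := p.adj_getVert_succ (i := i - 1) (by omega)
      rw [Nat.sub_add_cancel hpos] at h2
      have := three_le_degN h1 h2.symm hxy
        (fun h => by have := hinj _ _ (by omega) (by omega) h; omega) (hne _) (hne _)
      have := hpath (p.getVert i)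
      omega
  have hall : ∀ y, y ∈ p.support := by
    intro y
    obtain ⟨w⟩ := hP.connected.preconnected u y
    have key : ∀ (a b : V) (w : P.Walk a b), a ∈ p.support → b ∈ p.support := by
      intro a b w
      induction w with
      | nil => exact id
      | cons h _ ih => exact fun ha => ih (hclosed _ _ h ha)
    exact key u y w p.start_mem_support
  have hcard : Fintype.card V = p.length + 1 := by
    apply le_antisymm
    · rw [← p.length_support, ← Finset.card_univ]
      refine le_trans (Finset.card_le_card ?_) p.support.toFinset_card_le
      intro y _
      simpa using hall y
    · exact hp.length_lt
  refine ⟨p.getVert, ?_, ?_, ?_, ?_⟩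
  · exact fun i j hi hj h => hinj i j (by omega) (by omega) h
  · intro y
    obtain ⟨i, hi, hl⟩ := SimpleGraph.Walk.mem_support_iff_exists_getVert.1 (hall y)
    exact ⟨i, by omega, hi⟩
  · exact fun i hi => p.adj_getVert_succ (by omega)
  · exact fun i j hij hj h => consecutive_of_adj hP.isAcyclic hp hij (by omega) h

/-- The label pairs of the augmenting edges for the path `0, …, n - 1`, each written with its
smaller label first. -/
def chords (n : ℕ) : Finset (ℕ × ℕ) :=
  (Finset.range (n / 2)).image (fun i => (i, i + n / 2)) ∪
    (if n % 2 = 0 then {(0, n - 1)} else {(0, n - 1), (1, n - 1)})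

lemma mem_chords {n a b : ℕ} : (a, b) ∈ chords n ↔
    (a < n / 2 ∧ b = a + n / 2) ∨ (a = 0 ∧ b = n - 1) ∨ (n % 2 = 1 ∧ a = 1 ∧ b = n - 1) := by
  unfold chords
  split_ifs with h <;> simp <;> omega

lemma card_chords {n : ℕ} (hn : 4 ≤ n) : (chords n).card = (n + 2 + 1) / 2 := by
  unfold chords
  rw [Finset.card_union_of_disjoint, Finset.card_image_of_injective]
  · split_ifs with h
    · simp; omega
    · rw [Finset.card_pair (by simp)]; simp; omega
  · intro a b h
    simpa using h
  · rw [Finset.disjoint_left]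
    rintro ⟨a, b⟩ h
    split_ifs with h2 <;> simp at h ⊢ <;> omega

/-- For every path graph `P` on `n ≥ 4` vertices there is an augmenting set of exactly
`⌈(n+2)/2⌉` non-edges whose addition gives every vertex degree at least 3. -/
theorem path_augmentation_min_degree_three
    {V : Type*} [Fintype V] (P : SimpleGraph V) (hP : P.IsTree)
    (hpath : ∀ v : V, degN P v ≤ 2)
    (hn : 4 ≤ Fintype.card V) :
    ∃ F : Finset (Sym2 V),
      (∀ e ∈ F, ¬ e.IsDiag ∧ e ∉ P.edgeSet) ∧
      F.card = (Fintype.card V + 2 + 1) / 2 ∧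
      ∀ v : V, 3 ≤ degN (P ⊔ SimpleGraph.fromEdgeSet (F : Set (Sym2 V))) v := by
  classical
  obtain ⟨f, hinj, hsurj, hadj, hcons⟩ := exists_path_enumeration P hP hpath
  generalize Fintype.card V = n at *
  have hbd : ∀ a b, (a, b) ∈ chords n → a + 2 ≤ b ∧ b < n := by
    intro a b h
    rw [mem_chords] at h
    omega
  refine ⟨(chords n).image (fun x => s(f x.1, f x.2)), ?_, ?_, ?_⟩
  · intro e he
    obtain ⟨⟨a, b⟩, hab, rfl⟩ := Finset.mem_image.1 he
    have := hbd a b hab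
    refine ⟨fun h => ?_, fun h => ?_⟩
    · have := hinj a b (by omega) (by omega) (by simpa using h)
      omega
    · have := hcons a b (by omega) (by omega) (by simpa using h)
      omega
  · rw [Finset.card_image_of_injOn, card_chords hn]
    rintro ⟨a, b⟩ hab ⟨c, d⟩ hcd h
    have h1 := hbd a b hab
    have h2 := hbd c d hcd
    simp only [Sym2.eq_iff] at h
    rcases h with ⟨h, h'⟩ | ⟨h, h'⟩
    · rw [hinj _ _ (by omega) (by omega) h, hinj _ _ (by omega) (by omega) h']
    · have := hinj _ _ (by omega) (by omega) h
      have := hinj _ _ (by omega) (by omega) h'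
      omega
  · set G := P ⊔ SimpleGraph.fromEdgeSet
      (((chords n).image (fun x => s(f x.1, f x.2)) : Finset (Sym2 V)) : Set (Sym2 V)) with hG
    have hGP : ∀ i, i + 1 < n → G.Adj (f i) (f (i + 1)) := fun i hi => Or.inl (hadj i hi)
    have hGF : ∀ a b, (a, b) ∈ chords n → G.Adj (f a) (f b) := by
      intro a b hab
      refine Or.inr ((SimpleGraph.fromEdgeSet_adj _).2 ⟨?_, fun h => ?_⟩)
      · exact Finset.mem_coe.2 (Finset.mem_image.2 ⟨(a, b), hab, rfl⟩)
      · have := hbd a b hab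
        have := hinj a b (by omega) (by omega) h
        omega
    have hdeg : ∀ i a b c, G.Adj (f i) (f a) → G.Adj (f i) (f b) → G.Adj (f i) (f c) →
        a < n → b < n → c < n → a ≠ b → a ≠ c → b ≠ c → 3 ≤ degN G (f i) :=
      fun i a b c ha hb hc la lb lc hab hac hbc => three_le_degN ha hb hc
        (fun h => hab (hinj _ _ la lb h)) (fun h => hac (hinj _ _ la lc h))
        (fun h => hbc (hinj _ _ lb lc h))
    intro v
    obtain ⟨i, hi, rfl⟩ := hsurj v
    rcases Nat.eq_zero_or_pos i with rfl | hpos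
    · exact hdeg 0 1 (n / 2) (n - 1) (hGP 0 (by omega)) (hGF _ _ (mem_chords.2 (by omega)))
        (hGF _ _ (mem_chords.2 (by omega))) (by omega) (by omega) (by omega) (by omega) (by omega)
        (by omega)
    have hprev : G.Adj (f i) (f (i - 1)) := by
      have := hGP (i - 1) (by omega)
      rw [Nat.sub_add_cancel hpos] at this
      exact this.symm
    by_cases hlast : i = n - 1
    · have h0 : G.Adj (f i) (f 0) := (hGF 0 i (mem_chords.2 (by omega))).symm
      by_cases hpar : n % 2 = 0
      · exact hdeg i (i - 1) 0 (i - n / 2) hprev h0 (hGF _ _ (mem_chords.2 (by omega))).symm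
          (by omega) (by omega) (by omega) (by omega) (by omega) (by omega)
      · exact hdeg i (i - 1) 0 1 hprev h0 (hGF _ _ (mem_chords.2 (by omega))).symm
          (by omega) (by omega) (by omega) (by omega) (by omega) (by omega)
    · have hnext := hGP i (by omega)
      by_cases hlow : i < n / 2
      · exact hdeg i (i - 1) (i + 1) (i + n / 2) hprev hnext (hGF _ _ (mem_chords.2 (by omega)))
          (by omega) (by omega) (by omega) (by omega) (by omega) (by omega)
      · exact hdeg i (i - 1) (i + 1) (i - n / 2) hprev hnext
          (hGF _ _ (mem_chords.2 (by omega))).symm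
          (by omega) (by omega) (by omega) (by omega) (by omega) (by omega)
end

section
/- For every path graph P on n ≥ 4 vertices, there exists a set F of exactly ⌈(n+2)/2⌉ unordered pairs of distinct vertices of P that are not edges of P such that the graph P + F is 3-vertex-connected. -/
/-- A tree of maximum degree at most two is a path: its vertices can be listed without repetition
such that adjacency means being consecutive. -/
lemma exists_path_ordering {V : Type*} [Fintype V] (P : SimpleGraph V) (hP : P.IsTree)
    (hpath : ∀ v : V, degN P v ≤ 2) :
    ∃ p : ℕ → V,
      (∀ i < Fintype.card V, ∀ j < Fintype.card V, p i = p j → i = j) ∧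
      (∀ v, ∃ i < Fintype.card V, p i = v) ∧
      (∀ i, i + 1 < Fintype.card V → P.Adj (p i) (p (i + 1))) ∧
      (∀ i j, i < j → j < Fintype.card V → P.Adj (p i) (p j) → j = i + 1) := by
  classical
  have := hP.1.nonempty
  obtain ⟨u, v, w, hw, hmax⟩ := SimpleGraph.Walk.exists_isPath_forall_isPath_length_le_length P
  have hinj : ∀ i ≤ w.length, ∀ j ≤ w.length, w.getVert i = w.getVert j → i = j :=
    fun i hi j hj h => hw.getVert_injOn hi hj h
  have hsurj : ∀ x, x ∈ w.support := by
    intro x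
    by_contra hx
    obtain ⟨q⟩ := hP.1.preconnected u x
    obtain ⟨⟨⟨a, b⟩, hab⟩, -, ha, hb⟩ :=
      q.exists_boundary_dart {y | y ∈ w.support} (by simp) hx
    simp only [Set.mem_ofPred_eq] at ha hb hab
    obtain ⟨k, hk, hkl⟩ := SimpleGraph.Walk.mem_support_iff_exists_getVert.1 ha
    rcases Nat.eq_zero_or_pos k with h0 | h0
    · -- the path could be prolonged at its start
      subst h0
      rw [SimpleGraph.Walk.getVert_zero] at hk
      subst hk
      have := hmax _ _ (SimpleGraph.Walk.cons hab.symm w)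
        ((SimpleGraph.Walk.cons_isPath_iff _ _).2 ⟨hw, hb⟩)
      simp at this
    rcases hkl.eq_or_lt with h1 | h1
    · -- the path could be prolonged at its end
      subst h1
      rw [SimpleGraph.Walk.getVert_length] at hk
      subst hk
      have := hmax _ _ (w.concat hab) (hw.concat hb hab)
      simp at this
    · -- `a` is an inner vertex with the third neighbour `b`
      have hp : P.Adj a (w.getVert (k - 1)) := by
        have := w.adj_getVert_succ (i := k - 1) (by omega)
        rw [Nat.sub_add_cancel h0, hk] at this
        exact this.symm
      have hs : P.Adj a (w.getVert (k + 1)) := hk ▸ w.adj_getVert_succ h1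
      have hne : w.getVert (k - 1) ≠ w.getVert (k + 1) := fun h => by
        have := hinj _ (by omega) _ (by omega) h
        omega
      have hbn : ∀ i, b ≠ w.getVert i := fun i h => hb (h ▸ w.getVert_mem_support i)
      have hsub : ({b, w.getVert (k - 1), w.getVert (k + 1)} : Set V) ⊆ P.neighborSet a := by
        rintro y (rfl | rfl | rfl)
        exacts [hab, hp, hs]
      have h3 := Set.ncard_le_ncard hsub (Set.toFinite _)
      rw [Set.ncard_eq_three.2 ⟨_, _, _, hbn _, hbn _, hne, rfl⟩] at h3
      have := hpath a
      unfold degN at this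
      omega
  have hcard : Fintype.card V = w.length + 1 := by
    rw [← SimpleGraph.Walk.length_support, ← List.toFinset_card_of_nodup hw.support_nodup,
      ← Finset.card_univ]
    congr 1
    ext x
    simp [hsurj x]
  refine ⟨w.getVert, ?_, ?_, ?_, ?_⟩
  · intro i hi j hj h
    exact hinj i (by omega) j (by omega) h
  · intro x
    obtain ⟨k, hk, hkl⟩ := SimpleGraph.Walk.mem_support_iff_exists_getVert.1 (hsurj x)
    exact ⟨k, by omega, hk⟩
  · intro i hi
    exact w.adj_getVert_succ (by omega)
  · intro i j hij hj hadj
    have hend : (w.drop i).getVert (j - i) = w.getVert j := by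
      rw [SimpleGraph.Walk.drop_getVert]
      congr 1
      omega
    have hadj' : P.Adj (w.getVert i) ((w.drop i).getVert (j - i)) := hend ▸ hadj
    have heq := (hP.2.subsingleton_path _ _).elim ⟨(w.drop i).take (j - i), (hw.drop i).take _⟩
      (SimpleGraph.Path.singleton hadj')
    have hlen := congrArg (fun q => q.1.length) heq
    simp [SimpleGraph.Path.singleton, SimpleGraph.Walk.take_length,
      SimpleGraph.Walk.drop_length] at hlen
    omega

/-- Connectivity of the augmented graph after a deletion, on the level of indices: `r` plays
the role of reachability among the indices `< n` other than `a` and `b`. A value `≥ n` of `a` or `b` stands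
for no deletion, which covers deletion sets with fewer than two elements. -/
lemma arcs_joined {n m a b : ℕ} (hn : 4 ≤ n) (hm : m = n / 2) (hab : a < b)
    (hbn : b ≤ n ∨ n ≤ a) (r : ℕ → ℕ → Prop)
    (symm : ∀ i j, r i j → r j i) (trans : ∀ i j k, r i j → r j k → r i k)
    (rfl' : ∀ i < n, i ≠ a → i ≠ b → r i i)
    (step : ∀ i, i + 1 < n → i ≠ a → i ≠ b → i + 1 ≠ a → i + 1 ≠ b → r i (i + 1))
    (chord : ∀ i, i + m < n → i ≠ a → i ≠ b → i + m ≠ a → i + m ≠ b → r i (i + m))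
    (wrap : 0 ≠ a → n - 1 ≠ a → n - 1 ≠ b → r 0 (n - 1)) :
    ∀ i < n, ∀ j < n, i ≠ a → i ≠ b → j ≠ a → j ≠ b → r i j := by
  have interval : ∀ i d, i + d < n → (∀ k, i ≤ k → k ≤ i + d → k ≠ a ∧ k ≠ b) →
      r i (i + d) := by
    intro i d
    induction d with
    | zero => intro h hk; exact rfl' i h (hk i le_rfl le_rfl).1 (hk i le_rfl le_rfl).2
    | succ d ih =>
      intro h hk
      have h1 := hk (i + d) (by omega) (by omega)
      have h2 := hk (i + d + 1) (by omega) (by omega)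
      exact trans _ _ _ (ih (by omega) fun k _ _ => hk k (by omega) (by omega))
        (step (i + d) (by omega) h1.1 h1.2 h2.1 h2.2)
  have seg : ∀ i j, i < n → j < n →
      (∀ k, (i ≤ k ∧ k ≤ j ∨ j ≤ k ∧ k ≤ i) → k ≠ a ∧ k ≠ b) → r i j := by
    intro i j hi hj hk
    rcases le_total i j with h | h
    · obtain ⟨d, rfl⟩ := Nat.exists_eq_add_of_le h
      exact interval i d hj fun k _ _ => hk k (by omega)
    · obtain ⟨d, rfl⟩ := Nat.exists_eq_add_of_le h
      exact symm _ _ (interval j d hi fun k _ _ => hk k (by omega))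
  have inner : ∀ i j, i < n → j < n → a < i → i < b → a < j → j < b → r i j :=
    fun i j hi hj _ _ _ _ => seg i j hi hj fun k _ => by omega
  have outer : ∀ i j, i < n → j < n → (i < a ∨ b < i) → (j < a ∨ b < j) → r i j := by
    have cross : ∀ i j, i < n → j < n → i < a → b < j → r i j := fun i j hi hj _ _ =>
      trans _ _ _ (seg i 0 hi (by omega) fun k _ => by omega)
        (trans _ _ _ (wrap (by omega) (by omega) (by omega))
          (seg (n - 1) j (by omega) hj fun k _ => by omega))
    rintro i j hi hj (h | h) (h' | h')
    · exact seg i j hi hj fun k _ => by omega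
    · exact cross i j hi hj h h'
    · exact symm _ _ (cross j i hj hi h' h)
    · exact seg i j hi hj fun k _ => by omega
  have bridge : ∀ i j, i < n → j < n → a < i → i < b → (j < a ∨ b < j) →
      ∃ x y, x < n ∧ y < n ∧ a < x ∧ x < b ∧ (y < a ∨ b < y) ∧ r x y := by
    intro i j hi hj h1 h2 h3
    by_cases hs : b - a ≤ m
    · -- the inner arc is the short one: use the chord at its first vertex
      by_cases hx : a + 1 + m < n
      · exact ⟨a + 1, a + 1 + m, by omega, by omega, by omega, by omega, by omega,
          chord _ hx (by omega) (by omega) (by omega) (by omega)⟩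
      · have := chord (a + 1 - m) (by omega) (by omega) (by omega) (by omega) (by omega)
        rw [Nat.sub_add_cancel (by omega)] at this
        exact ⟨a + 1, a + 1 - m, by omega, by omega, by omega, by omega, by omega,
          symm _ _ this⟩
    · -- the outer arc is the short one: use the chord at an end of it next to `a` or `b`
      rcases h3 with h3 | h3
      · exact ⟨a - 1 + m, a - 1, by omega, by omega, by omega, by omega, by omega,
          symm _ _ (chord _ (by omega) (by omega) (by omega) (by omega) (by omega))⟩
      · have := chord (b + 1 - m) (by omega) (by omega) (by omega) (by omega) (by omega)
        rw [Nat.sub_add_cancel (by omega)] at this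
        exact ⟨b + 1 - m, b + 1, by omega, by omega, by omega, by omega, by omega, this⟩
  have mixed : ∀ i j, i < n → j < n → a < i → i < b → (j < a ∨ b < j) → r i j := by
    intro i j hi hj h1 h2 h3
    obtain ⟨x, y, hx, hy, h4, h5, h6, hr⟩ := bridge i j hi hj h1 h2 h3
    exact trans _ _ _ (inner i x hi hx h1 h2 h4 h5) (trans _ _ _ hr (outer y j hy hj h6 h3))
  intro i hi j hj hia hib hja hjb
  by_cases h1 : a < i ∧ i < b
  · by_cases h2 : a < j ∧ j < b
    · exact inner i j hi hj h1.1 h1.2 h2.1 h2.2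
    · exact mixed i j hi hj h1.1 h1.2 (by omega)
  · by_cases h2 : a < j ∧ j < b
    · exact symm _ _ (mixed j i hj hi h2.1 h2.2 (by omega))
    · exact outer i j hi hj (by omega) (by omega)

/-- For every path graph `P` on `n ≥ 4` vertices there is an augmenting set of exactly
`⌈(n+2)/2⌉` non-edges whose addition makes the graph 3-vertex-connected. -/
theorem path_augmentation_three_connected
    {V : Type*} [Fintype V] (P : SimpleGraph V) (hP : P.IsTree)
    (hpath : ∀ v : V, degN P v ≤ 2)
    (hn : 4 ≤ Fintype.card V) :
    ∃ F : Finset (Sym2 V),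
      (∀ e ∈ F, ¬ e.IsDiag ∧ e ∉ P.edgeSet) ∧
      F.card = (Fintype.card V + 2 + 1) / 2 ∧
      ThreeConnected (P ⊔ SimpleGraph.fromEdgeSet (F : Set (Sym2 V))) := by
  classical
  obtain ⟨p, hinj, hsurj, hadj, hcons⟩ := exists_path_ordering P hP hpath
  generalize hN : Fintype.card V = n at *
  obtain ⟨m, hm⟩ : ∃ m, m = n / 2 := ⟨_, rfl⟩
  have hne : ∀ i j, i + 1 < j → j < n →
      ¬ (s(p i, p j)).IsDiag ∧ s(p i, p j) ∉ P.edgeSet := by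
    intro i j hij hj
    refine ⟨fun h => ?_, fun h => ?_⟩
    · have := hinj i (by omega) j hj (by simpa using h)
      omega
    · have := hcons i j (by omega) hj (by simpa using h)
      omega
  have hpair : ∀ i j k l, i < j → j < n → k < l → l < n → s(p i, p j) = s(p k, p l) →
      i = k ∧ j = l := by
    intro i j k l hij hj hkl hl h
    rcases Sym2.eq_iff.1 h with ⟨h1, h2⟩ | ⟨h1, h2⟩
    · exact ⟨hinj _ (by omega) _ (by omega) h1, hinj _ (by omega) _ (by omega) h2⟩
    · have := hinj _ (by omega) _ (by omega) h1
      have := hinj _ (by omega) _ (by omega) h2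
      omega
  set F : Finset (Sym2 V) := insert s(p 0, p (n - 1))
    ((Finset.range (n - m)).image fun i => s(p i, p (i + m))) with hF
  have hFP : ∀ e ∈ F, ¬ e.IsDiag ∧ e ∉ P.edgeSet := by
    intro e he
    rw [hF, Finset.mem_insert, Finset.mem_image] at he
    rcases he with rfl | ⟨i, hi, rfl⟩
    · exact hne _ _ (by omega) (by omega)
    · rw [Finset.mem_range] at hi
      exact hne _ _ (by omega) (by omega)
  refine ⟨F, hFP, ?_, ?_⟩
  · rw [hF, Finset.card_insert_of_notMem, Finset.card_image_of_injOn, Finset.card_range]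
    · omega
    · intro i hi j hj h
      simp only [Finset.coe_range, Set.mem_Iio] at hi hj
      exact (hpair _ _ _ _ (by omega) (by omega) (by omega) (by omega) h).1
    · intro h
      obtain ⟨i, hi, h⟩ := Finset.mem_image.1 h
      rw [Finset.mem_range] at hi
      have := hpair _ _ _ _ (by omega) (by omega) (by omega) (by omega) h
      omega
  · intro S hS
    set G := P ⊔ SimpleGraph.fromEdgeSet (F : Set (Sym2 V)) with hG
    have hGF : ∀ x y, s(x, y) ∈ F → G.Adj x y := fun x y h =>
      Or.inr ((SimpleGraph.fromEdgeSet_adj _).2 ⟨h, by simpa using (hFP _ h).1⟩)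
    -- indices of the deleted vertices, padded by values `≥ n`
    obtain ⟨a, b, hab, hbn, hSab⟩ : ∃ a b, a < b ∧ (b ≤ n ∨ n ≤ a) ∧
        ∀ i < n, p i ∈ S ↔ i = a ∨ i = b := by
      have hiff : ∀ i < n, ∀ j < n, p i = p j ↔ i = j := fun i hi j hj =>
        ⟨hinj i hi j hj, congrArg p⟩
      have h012 : S.card = 0 ∨ S.card = 1 ∨ S.card = 2 := by omega
      rcases h012 with h | h | h
      · rw [Finset.card_eq_zero] at h
        subst h
        exact ⟨n, n + 1, by omega, by omega, fun i hi => by simp; omega⟩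
      · obtain ⟨x, rfl⟩ := Finset.card_eq_one.1 h
        obtain ⟨a, ha, rfl⟩ := hsurj x
        exact ⟨a, n, ha, by omega, fun i hi => by
          rw [Finset.mem_singleton, hiff i hi a ha]; omega⟩
      · obtain ⟨x, y, hxy, rfl⟩ := Finset.card_eq_two.1 h
        obtain ⟨a, ha, rfl⟩ := hsurj x
        obtain ⟨b, hb, rfl⟩ := hsurj y
        have hab : a ≠ b := fun h => hxy (congrArg p h)
        have key : ∀ i < n, p i ∈ ({p a, p b} : Finset V) ↔ i = a ∨ i = b := fun i hi => by
          rw [Finset.mem_insert, Finset.mem_singleton, hiff i hi a ha, hiff i hi b hb]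
        rcases lt_or_gt_of_ne hab with h | h
        · exact ⟨a, b, h, by omega, key⟩
        · exact ⟨b, a, h, by omega, fun i hi => (key i hi).trans or_comm⟩
    have hout : ∀ i < n, i ≠ a → i ≠ b → p i ∈ ((S : Set V)ᶜ) := by
      intro i hi h1 h2 h
      rcases (hSab i hi).1 h with h | h
      exacts [h1 h, h2 h]
    have hedge : ∀ i < n, ∀ j < n, i ≠ a → i ≠ b → j ≠ a → j ≠ b → G.Adj (p i) (p j) →
        ∃ (hi : p i ∈ ((S : Set V)ᶜ)) (hj : p j ∈ ((S : Set V)ᶜ)),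
          (G.induce ((S : Set V)ᶜ)).Reachable ⟨p i, hi⟩ ⟨p j, hj⟩ :=
      fun i hi j hj h1 h2 h3 h4 h => ⟨hout i hi h1 h2, hout j hj h3 h4,
        SimpleGraph.Adj.reachable (by simpa using h)⟩
    have main := arcs_joined hn hm hab hbn
      (fun i j => ∃ (hi : p i ∈ ((S : Set V)ᶜ)) (hj : p j ∈ ((S : Set V)ᶜ)),
        (G.induce ((S : Set V)ᶜ)).Reachable ⟨p i, hi⟩ ⟨p j, hj⟩)
      (fun i j ⟨hi, hj, h⟩ => ⟨hj, hi, h.symm⟩)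
      (fun i j k ⟨hi, hj, h⟩ ⟨_, hk, h'⟩ => ⟨hi, hk, h.trans h'⟩)
      (fun i hi h1 h2 => ⟨hout i hi h1 h2, hout i hi h1 h2, SimpleGraph.Reachable.refl _⟩)
      (fun i hi h1 h2 h3 h4 => hedge _ (by omega) _ hi h1 h2 h3 h4 (Or.inl (hadj i hi)))
      (fun i hi h1 h2 h3 h4 => hedge _ (by omega) _ hi h1 h2 h3 h4
        (hGF _ _ (Finset.mem_insert_of_mem
          (Finset.mem_image.2 ⟨i, Finset.mem_range.2 (by omega), rfl⟩))))
      (fun h1 h2 h3 => hedge _ (by omega) _ (by omega) h1 (by omega) h2 h3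
        (hGF _ _ (Finset.mem_insert_self _ _)))
    have hnonempty : ∃ i < n, i ≠ a ∧ i ≠ b := by
      by_contra! h
      have h0 := h 0 (by omega)
      have h1 := h 1 (by omega)
      have h2 := h 2 (by omega)
      omega
    obtain ⟨i, hi, hia, hib⟩ := hnonempty
    have : Nonempty ((S : Set V)ᶜ : Set V) := ⟨⟨p i, hout i hi hia hib⟩⟩
    refine SimpleGraph.Connected.mk ?_
    rintro ⟨x, hx⟩ ⟨y, hy⟩
    obtain ⟨j, hj, rfl⟩ := hsurj x
    obtain ⟨k, hk, rfl⟩ := hsurj y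
    have hj' : ¬ (j = a ∨ j = b) := fun h => hx ((hSab j hj).2 h)
    have hk' : ¬ (k = a ∨ k = b) := fun h => hy ((hSab k hk).2 h)
    push Not at hj' hk'
    obtain ⟨_, _, h⟩ := main j hj k hk hj'.1 hj'.2 hk'.1 hk'.2
    exact h
end

section
/- Let T be a finite tree on n ≥ 4 vertices with maximum degree at least 3, and let l1 and l2 denote the number of vertices of T of degree 1 and of degree 2, respectively. Then there exists a set F of exactly ⌈(2·l1 + l2)/2⌉ unordered pairs of distinct vertices of T that are not edges of T such that the graph T + F is 3-vertex-connected. -/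
section
open scoped Classical

variable {V : Type*}

/-! ### Operations preserving 3-connectedness -/

/-- The graph induced by `G` on `W` stays connected after removing any two vertices `s`, `t`,
equal ones and ones outside `W` allowed. Connectedness is expressed by saying that every
predicate constant along edges is constant. -/
def TC (W : Finset V) (G : SimpleGraph V) : Prop :=
  ∀ (s t : V) (A : V → Prop),
    (∀ a ∈ W, ∀ b ∈ W, a ≠ s → a ≠ t → b ≠ s → b ≠ t → G.Adj a b → (A a ↔ A b)) →
    ∀ a ∈ W, ∀ b ∈ W, a ≠ s → a ≠ t → b ≠ s → b ≠ t → (A a ↔ A b)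

theorem exists_fourth {W : Finset V} (h4 : 4 ≤ W.card) (x y z : V) :
    ∃ k ∈ W, k ≠ x ∧ k ≠ y ∧ k ≠ z := by
  have h : 0 < (W \ {x, y, z}).card := by
    have h1 := Finset.le_card_sdiff {x, y, z} W
    have h2 : ({x, y, z} : Finset V).card ≤ 3 := Finset.card_le_three
    omega
  obtain ⟨k, hk⟩ := Finset.card_pos.mp h
  exact ⟨k, by simpa using hk⟩

theorem TC.exists_adj {W : Finset V} {G : SimpleGraph V} (h : TC W G) (h4 : 4 ≤ W.card)
    {v s t : V} (hv : v ∈ W) (hs : v ≠ s) (ht : v ≠ t) :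
    ∃ k ∈ W, k ≠ s ∧ k ≠ t ∧ k ≠ v ∧ G.Adj v k := by
  by_contra! hc
  obtain ⟨b, hb, hbv, hbs, hbt⟩ := exists_fourth h4 v s t
  have := h s t (· = v) (by
    intro a ha b hb h1 h2 h3 h4 hab
    have := hab.ne
    have := hab.symm
    grind) v hv b hb hs ht hbs hbt
  grind

/-- A 3-connected graph remains connected after deleting a vertex `r` and an edge `xy`. -/
theorem TC.del_vertex_edge {W : Finset V} {G : SimpleGraph V} (h : TC W G) (h4 : 4 ≤ W.card)
    {r x y : V} (hx : x ∈ W) (hy : y ∈ W) (hxy : x ≠ y) {A : V → Prop}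
    (hA : ∀ a ∈ W, ∀ b ∈ W, a ≠ r → b ≠ r → G.Adj a b →
      (A a ↔ A b) ∨ (a = x ∧ b = y) ∨ (a = y ∧ b = x)) :
    ∀ a ∈ W, ∀ b ∈ W, a ≠ r → b ≠ r → (A a ↔ A b) := by
  intro a ha b hb har hbr
  by_cases hs : x = r ∨ y = r ∨ (A x ↔ A y)
  · refine h r r A ?_ a ha b hb har har hbr hbr
    intro a ha b hb h1 _ h3 _ hab
    rcases hA a ha b hb h1 h3 hab with h5 | ⟨rfl, rfl⟩ | ⟨rfl, rfl⟩
    · exact h5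
    · tauto
    · tauto
  · push Not at hs
    obtain ⟨hxr, hyr, hne⟩ := hs
    have hc := h r x A (by
      intro a ha b hb h1 h2 h3 h4 hab
      rcases hA a ha b hb h1 h3 hab with h5 | ⟨rfl, rfl⟩ | ⟨rfl, rfl⟩
      · exact h5
      · exact absurd rfl h2
      · exact absurd rfl h4)
    obtain ⟨k, hk, hkr, hky, hkx, hxk⟩ := h.exists_adj h4 hx hxr hxy
    have h1 : A x ↔ A k := by
      rcases hA x hx k hk hxr hkr hxk with h5 | ⟨_, h5⟩ | ⟨_, h5⟩
      · exact h5
      · exact absurd h5 hky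
      · exact absurd h5 hkx
    have h2 := hc k hk y hy hkr hkx hyr hxy.symm
    tauto

/-- A 3-connected graph remains connected after deleting two distinct edges `xy` and `wz`. The
assumption that `w` is not an end of `xy` only fixes the naming of the ends. -/
theorem TC.del_two_edges {W : Finset V} {G : SimpleGraph V} (h : TC W G) (h4 : 4 ≤ W.card)
    {x y w z : V} (hx : x ∈ W) (hw : w ∈ W) (hxy : x ≠ y) (hwz : w ≠ z)
    (hwx : w ≠ x) (hwy : w ≠ y) {A : V → Prop}
    (hA : ∀ a ∈ W, ∀ b ∈ W, G.Adj a b → (A a ↔ A b) ∨ (a = x ∧ b = y) ∨ (a = y ∧ b = x) ∨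
      (a = w ∧ b = z) ∨ (a = z ∧ b = w)) :
    ∀ a ∈ W, ∀ b ∈ W, (A a ↔ A b) := by
  -- deleting `x` and `w` removes both edges, and `x`, `w` keep a neighbour each through the
  -- remaining edges
  have hc := h x w A (by
    intro a ha b hb h1 h2 h3 h4 hab
    have := hA a ha b hb hab
    tauto)
  obtain ⟨k, hk, hk1, hk2, hk3, hxk⟩ := h.exists_adj h4 hx hxy hwx.symm
  have h1 : A x ↔ A k := by
    have := hA x hx k hk hxk
    grind
  obtain ⟨l, hl, hl1, hl2, hl3, hwl⟩ := h.exists_adj h4 hw hwz hwx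
  have h2 : A w ↔ A l := by
    have := hA w hw l hl hwl
    grind
  have h3 := hc k hk l hl hk3 hk2 hl2 hl3
  have e : ∀ a ∈ W, (A a ↔ A k) := by
    intro a ha
    by_cases hax : a = x
    · rw [hax, h1]
    by_cases haw : a = w
    · rw [haw, h2, h3]
    exact hc a ha k hk hax haw hk3 hk2
  intro a ha b hb
  rw [e a ha, e b hb]

/-- Subdividing an edge `ab` of a 3-connected graph by a new vertex `q` and joining `q` to a third
vertex `p` preserves 3-connectedness. Whether `ab` is an edge of `G'` does not matter. -/
theorem TC.subdivide {W : Finset V} {G' G : SimpleGraph V} (h : TC W G') (h4 : 4 ≤ W.card)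
    {q a b p : V} (hqW : q ∉ W) (ha : a ∈ W) (hb : b ∈ W) (hp : p ∈ W)
    (hab : a ≠ b) (hap : a ≠ p) (hbp : b ≠ p)
    (qa : G.Adj q a) (qb : G.Adj q b) (qp : G.Adj q p)
    (hG : ∀ x y, G'.Adj x y → G.Adj x y ∨ (x = a ∧ y = b) ∨ (x = b ∧ y = a)) :
    TC (insert q W) G := by
  intro s t A hA
  have hWA : ∀ x ∈ W, ∀ y ∈ W, x ≠ s → x ≠ t → y ≠ s → y ≠ t → G.Adj x y → (A x ↔ A y) :=
    fun x hx y hy => hA x (by simp [hx]) y (by simp [hy])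
  have hqA : q ≠ s → q ≠ t → ∀ x ∈ W, x ≠ s → x ≠ t → G.Adj q x → (A q ↔ A x) :=
    fun h1 h2 x hx h3 h4 h5 => hA q (by simp) x (by simp [hx]) h1 h2 h3 h4 h5
  clear hA
  by_cases hqs : q = s ∨ q = t
  · obtain ⟨r, hr⟩ : ∃ r, (q = s ∧ r = t) ∨ (q = t ∧ r = s) := by
      rcases hqs with h1 | h1
      · exact ⟨t, .inl ⟨h1, rfl⟩⟩
      · exact ⟨s, .inr ⟨h1, rfl⟩⟩
    -- only the old vertices different from `r` survive
    have := h.del_vertex_edge h4 (r := r) ha hb hab (A := A) (by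
      intro x hx y hy h1 h2 hxy
      have hxq : x ≠ q := by rintro rfl; exact hqW hx
      have hyq : y ≠ q := by rintro rfl; exact hqW hy
      rcases hG x y hxy with h5 | h5
      · left
        apply hWA x hx y hy <;> grind
      · exact .inr h5)
    intro x hx y hy h1 h2 h3 h4
    rw [Finset.mem_insert] at hx hy
    apply this x _ y <;> grind
  · push Not at hqs
    obtain ⟨h1, h2⟩ := hqs
    have hqA := hqA h1 h2
    have ea := hqA a ha
    have eb := hqA b hb
    have ep := hqA p hp
    have old := h s t A (by
      intro x hx y hy h1 h2 h3 h4 hxy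
      rcases hG x y hxy with h5 | ⟨rfl, rfl⟩ | ⟨rfl, rfl⟩
      · exact hWA x hx y hy h1 h2 h3 h4 h5
      · rw [← ea h1 h2 qa, ← eb h3 h4 qb]
      · rw [← ea h3 h4 qa, ← eb h1 h2 qb])
    have new : ∀ x ∈ W, x ≠ s → x ≠ t → (A q ↔ A x) := by
      intro x hx h3 h4
      obtain ⟨k, hk, hks, hkt, hqk⟩ : ∃ k ∈ W, k ≠ s ∧ k ≠ t ∧ G.Adj q k := by
        by_cases hha : a = s ∨ a = t
        · by_cases hhb : b = s ∨ b = t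
          · refine ⟨p, hp, ?_, ?_, qp⟩ <;> grind
          · exact ⟨b, hb, by tauto, by tauto, qb⟩
        · exact ⟨a, ha, by tauto, by tauto, qa⟩
      rw [hqA k hk hks hkt hqk, old k hk x hx hks hkt h3 h4]
    intro x hx y hy hxs hxt hys hyt
    rw [Finset.mem_insert] at hx hy
    rcases hx with rfl | hx <;> rcases hy with rfl | hy
    · rfl
    · exact new y hy hys hyt
    · exact (new x hx hxs hxt).symm
    · exact old x hx y hy hxs hxt hys hyt

/-- The case of `TC.bridge` in which one of the two new vertices is deleted: the other new
vertex `v`, subdividing `wz`, stays attached after deleting one further vertex `r`. -/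
theorem TC.bridge_aux {W : Finset V} {G' G : SimpleGraph V} (h : TC W G') (h4 : 4 ≤ W.card)
    {v x y w z : V} (hx : x ∈ W) (hy : y ∈ W)
    (hw : w ∈ W) (hz : z ∈ W) (hxy : x ≠ y) (hwz : w ≠ z)
    (vw : G.Adj v w) (vz : G.Adj v z)
    (hG : ∀ a b, G'.Adj a b → G.Adj a b ∨ (a = x ∧ b = y) ∨ (a = y ∧ b = x) ∨
      (a = w ∧ b = z) ∨ (a = z ∧ b = w))
    {A : V → Prop} {r : V} (hvr : v ≠ r)
    (hA : ∀ a ∈ insert v W, ∀ b ∈ insert v W, a ≠ r → b ≠ r → G.Adj a b → (A a ↔ A b)) :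
    ∀ a ∈ insert v W, ∀ b ∈ insert v W, a ≠ r → b ≠ r → (A a ↔ A b) := by
  have hv' : ∀ a ∈ W, a ≠ r → G.Adj v a → (A v ↔ A a) :=
    fun a ha h1 h2 => hA v (by simp) a (by simp [ha]) hvr h1 h2
  have ew := hv' w hw
  have ez := hv' z hz
  have old := h.del_vertex_edge h4 (r := r) hx hy hxy (A := A) (by
    intro a ha b hb h1 h2 hab
    rcases hG a b hab with h5 | h5 | h5 | ⟨rfl, rfl⟩ | ⟨rfl, rfl⟩
    · exact .inl (hA a (by simp [ha]) b (by simp [hb]) h1 h2 h5)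
    · exact .inr (.inl h5)
    · exact .inr (.inr h5)
    · left; rw [← ew h1 vw, ← ez h2 vz]
    · left; rw [← ew h2 vw, ← ez h1 vz])
  have new : ∀ a ∈ W, a ≠ r → (A v ↔ A a) := by
    intro a ha h1
    by_cases hwr : w = r
    · have hzr : z ≠ r := by rintro rfl; exact hwz hwr
      rw [ez hzr vz, old z hz a ha hzr h1]
    · rw [ew hwr vw, old w hw a ha hwr h1]
  intro a ha b hb h1 h2
  rw [Finset.mem_insert] at ha hb
  rcases ha with rfl | ha <;> rcases hb with rfl | hb
  · rfl
  · exact new b hb h2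
  · exact (new a ha h1).symm
  · exact old a ha b hb h1 h2

/-- Subdividing two distinct edges `xy` and `wz` of a 3-connected graph by new vertices `u` and
`v` and joining `u` to `v` preserves 3-connectedness. -/
theorem TC.bridge {W : Finset V} {G' G : SimpleGraph V} (h : TC W G') (h4 : 4 ≤ W.card)
    {u v x y w z : V} (hu : u ∉ W) (hv : v ∉ W) (hx : x ∈ W) (hy : y ∈ W)
    (hw : w ∈ W) (hz : z ∈ W) (hxy : x ≠ y) (hwz : w ≠ z) (hwx : w ≠ x) (hwy : w ≠ y)
    (ux : G.Adj u x) (uy : G.Adj u y) (uv : G.Adj u v) (vw : G.Adj v w) (vz : G.Adj v z)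
    (hG : ∀ a b, G'.Adj a b → G.Adj a b ∨ (a = x ∧ b = y) ∨ (a = y ∧ b = x) ∨
      (a = w ∧ b = z) ∨ (a = z ∧ b = w)) :
    TC (insert u (insert v W)) G := by
  have huv := uv.ne
  intro s t A hA
  by_cases hus : u = s ∨ u = t
  · by_cases hvs : v = s ∨ v = t
    · -- only the old vertices survive
      have old := h.del_two_edges h4 hx hw hxy hwz hwx hwy (A := A) (by
        intro a ha b hb hab
        have hau : a ≠ u := by rintro rfl; exact hu ha
        have hav : a ≠ v := by rintro rfl; exact hv ha
        have hbu : b ≠ u := by rintro rfl; exact hu hb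
        have hbv : b ≠ v := by rintro rfl; exact hv hb
        rcases hG a b hab with h5 | h5
        · left
          refine hA a (by simp [ha]) b (by simp [hb]) ?_ ?_ ?_ ?_ h5 <;> grind
        · exact .inr h5)
      intro a ha b hb h1 h2 h3 h4
      rw [Finset.mem_insert, Finset.mem_insert] at ha hb
      apply old a _ b <;> grind
    · obtain ⟨r, hr⟩ : ∃ r, (u = s ∧ r = t) ∨ (u = t ∧ r = s) := by
        rcases hus with h1 | h1
        · exact ⟨t, .inl ⟨h1, rfl⟩⟩
        · exact ⟨s, .inr ⟨h1, rfl⟩⟩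
      have := h.bridge_aux h4 hx hy hw hz hxy hwz vw vz hG (A := A) (r := r) (by grind) (by
        intro a ha b hb h1 h2 hab
        have hau : a ≠ u := by rintro rfl; rw [Finset.mem_insert] at ha; tauto
        have hbu : b ≠ u := by rintro rfl; rw [Finset.mem_insert] at hb; tauto
        refine hA a (by simp [ha]) b (by simp [hb]) ?_ ?_ ?_ ?_ hab <;> grind)
      intro a ha b hb h1 h2 h3 h4
      rw [Finset.mem_insert] at ha hb
      apply this a _ b <;> grind
  · by_cases hvs : v = s ∨ v = t
    · obtain ⟨r, hr⟩ : ∃ r, (v = s ∧ r = t) ∨ (v = t ∧ r = s) := by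
        rcases hvs with h1 | h1
        · exact ⟨t, .inl ⟨h1, rfl⟩⟩
        · exact ⟨s, .inr ⟨h1, rfl⟩⟩
      have hG2 : ∀ a b, G'.Adj a b → G.Adj a b ∨ (a = w ∧ b = z) ∨ (a = z ∧ b = w) ∨
          (a = x ∧ b = y) ∨ (a = y ∧ b = x) := fun a b hab => by
        have := hG a b hab; tauto
      rw [Finset.insert_comm] at hA ⊢
      have := h.bridge_aux h4 hw hz hx hy hwz hxy ux uy hG2 (A := A) (r := r) (by grind) (by
        intro a ha b hb h1 h2 hab
        have hau : a ≠ v := by rintro rfl; rw [Finset.mem_insert] at ha; tauto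
        have hbu : b ≠ v := by rintro rfl; rw [Finset.mem_insert] at hb; tauto
        refine hA a (by simp [ha]) b (by simp [hb]) ?_ ?_ ?_ ?_ hab <;> grind)
      intro a ha b hb h1 h2 h3 h4
      rw [Finset.mem_insert] at ha hb
      apply this a _ b <;> grind
    · push Not at hus hvs
      have hu' : ∀ a ∈ W, a ≠ s → a ≠ t → G.Adj u a → (A u ↔ A a) :=
        fun a ha => hA u (by simp) a (by simp [ha]) hus.1 hus.2
      have hv' : ∀ a ∈ W, a ≠ s → a ≠ t → G.Adj v a → (A u ↔ A a) :=
        fun a ha h1 h2 h3 => (hA u (by simp) v (by simp) hus.1 hus.2 hvs.1 hvs.2 uv).trans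
          (hA v (by simp) a (by simp [ha]) hvs.1 hvs.2 h1 h2 h3)
      have old := h s t A (by
        intro a ha b hb h1 h2 h3 h4 hab
        rcases hG a b hab with h5 | ⟨rfl, rfl⟩ | ⟨rfl, rfl⟩ | ⟨rfl, rfl⟩ | ⟨rfl, rfl⟩
        · exact hA a (by simp [ha]) b (by simp [hb]) h1 h2 h3 h4 h5
        · rw [← hu' _ ha h1 h2 ux, ← hu' _ hb h3 h4 uy]
        · rw [← hu' _ ha h1 h2 uy, ← hu' _ hb h3 h4 ux]
        · rw [← hv' _ ha h1 h2 vw, ← hv' _ hb h3 h4 vz]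
        · rw [← hv' _ ha h1 h2 vz, ← hv' _ hb h3 h4 vw])
      -- at most two of the three distinct vertices `x`, `y`, `w` are deleted
      obtain ⟨k, hk, hks, hkt, huk⟩ : ∃ k ∈ W, k ≠ s ∧ k ≠ t ∧ (A u ↔ A k) := by
        by_cases hha : x = s ∨ x = t
        · by_cases hhb : y = s ∨ y = t
          · have h1 : w ≠ s := by grind
            have h2 : w ≠ t := by grind
            exact ⟨w, hw, h1, h2, hv' w hw h1 h2 vw⟩
          · push Not at hhb
            exact ⟨y, hy, hhb.1, hhb.2, hu' y hy hhb.1 hhb.2 uy⟩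
        · push Not at hha
          exact ⟨x, hx, hha.1, hha.2, hu' x hx hha.1 hha.2 ux⟩
      have all : ∀ a ∈ insert u (insert v W), a ≠ s → a ≠ t → (A u ↔ A a) := by
        intro a ha h1 h2
        rw [Finset.mem_insert, Finset.mem_insert] at ha
        rcases ha with rfl | rfl | ha
        · rfl
        · exact hA u (by simp) a (by simp) hus.1 hus.2 hvs.1 hvs.2 uv
        · exact huk.trans (old k hk a ha hks hkt h1 h2)
      intro a ha b hb h1 h2 h3 h4
      rw [← all a ha h1 h2, ← all b hb h3 h4]

/-! ### Trees on a set of vertices -/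

variable [Fintype V]

/-- The neighbours of `v` in `T`, as a finset. -/
noncomputable def nb (T : SimpleGraph V) (v : V) : Finset V := Finset.univ.filter (T.Adj v)

@[simp] theorem mem_nb {T : SimpleGraph V} {v w : V} : w ∈ nb T v ↔ T.Adj v w := by simp [nb]

/-- All vertices of `W` lie in one connected component of `T`: every predicate constant along
edges is constant on `W`. -/
def Conn (W : Finset V) (T : SimpleGraph V) : Prop :=
  ∀ A : V → Prop, (∀ a b, T.Adj a b → (A a ↔ A b)) → ∀ a ∈ W, ∀ b ∈ W, (A a ↔ A b)

/-- `T` is a tree with vertex set `W`: its edges lie within `W`, it is connected on `W`, and its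
degree sum is `2 |W| - 2`. -/
structure TreeOn (W : Finset V) (T : SimpleGraph V) : Prop where
  mem : ∀ {a b}, T.Adj a b → a ∈ W
  conn : Conn W T
  sum : ∑ v ∈ W, (nb T v).card + 2 = 2 * W.card

/-- `T` without the edges at `u`. -/
def del (T : SimpleGraph V) (u : V) : SimpleGraph V where
  Adj a b := T.Adj a b ∧ a ≠ u ∧ b ≠ u
  symm := ⟨fun _ _ h => ⟨h.1.symm, h.2.2, h.2.1⟩⟩
  loopless := ⟨fun a h => T.loopless.irrefl a h.1⟩

theorem nb_del (T : SimpleGraph V) {u v : V} (h : v ≠ u) : nb (del T u) v = (nb T v).erase u := by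
  ext w
  simp [del, h]
  tauto

/-- `T` with the edges at `u` removed and the edge `xy` added; it is used for a vertex `u` of
degree two with neighbours `x` and `y`. -/
def suppress (T : SimpleGraph V) (u x y : V) : SimpleGraph V where
  Adj a b := a ≠ u ∧ b ≠ u ∧ a ≠ b ∧ (T.Adj a b ∨ (a = x ∧ b = y) ∨ (a = y ∧ b = x))
  symm := ⟨fun a b h => by have := T.adj_comm a b; tauto⟩
  loopless := ⟨fun a h => h.2.2.1 rfl⟩

theorem sum_del {W : Finset V} {T : SimpleGraph V} (hW : ∀ {a b}, T.Adj a b → a ∈ W) {u : V}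
    (hu : u ∈ W) :
    ∑ v ∈ W.erase u, (nb (del T u) v).card + 2 * (nb T u).card = ∑ v ∈ W, (nb T v).card := by
  have h1 : ∀ v ∈ W.erase u, (nb T v).card =
      (nb (del T u) v).card + if v ∈ nb T u then 1 else 0 := by
    intro v hv
    rw [nb_del T (Finset.ne_of_mem_erase hv)]
    split_ifs with h
    · rw [mem_nb] at h
      rw [Finset.card_erase_add_one]
      simpa using h.symm
    · rw [mem_nb] at h
      rw [Finset.erase_eq_of_notMem]
      · simp
      · simpa [T.adj_comm] using h
  rw [← Finset.add_sum_erase W _ hu, Finset.sum_congr rfl h1, Finset.sum_add_distrib,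
    Finset.sum_ite_mem]
  have h2 : W.erase u ∩ nb T u = nb T u := by
    apply Finset.inter_eq_right.mpr
    intro v hv
    rw [mem_nb] at hv
    exact Finset.mem_erase.mpr ⟨hv.ne', hW hv.symm⟩
  rw [h2]
  simp
  ring

/-- Deleting `u` preserves connectedness when a single neighbour `x` of `u` is adjacent to all
the other neighbours of `u`. -/
theorem Conn.del {W : Finset V} {T : SimpleGraph V} (hT : Conn W T)
    {u x : V} (hxu : x ≠ u) (hx : ∀ y, T.Adj u y → y = x ∨ T.Adj x y) :
    Conn (W.erase u) (del T u) := by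
  intro A hA a ha b hb
  have := hT (fun v => if v = u then A x else A v) (by
    intro a b hab
    have := hab.ne
    have := hab.symm
    have h1 := hA a b
    have h2 := hA x a
    have h3 := hA x b
    have h4 := hx a
    have h5 := hx b
    simp only [_root_.del] at h1 h2 h3
    grind) a (Finset.mem_of_mem_erase ha) b (Finset.mem_of_mem_erase hb)
  have h1 := Finset.ne_of_mem_erase ha
  have h2 := Finset.ne_of_mem_erase hb
  simpa [h1, h2] using this

theorem Conn.exists_adj {W : Finset V} {T : SimpleGraph V} (hT : Conn W T) (h2 : 2 ≤ W.card)
    {v : V} (hv : v ∈ W) : ∃ w, T.Adj v w := by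
  by_contra! hc
  obtain ⟨w, hw, hwv⟩ := Finset.exists_mem_ne (by omega : 1 < W.card) v
  have := hT (· = v) (by
    intro a b hab
    have := hc a
    have := hab.symm
    have := hc b
    grind) v hv w hw
  grind

theorem Conn.sum_ge {T : SimpleGraph V} {W : Finset V} (hT : Conn W T)
    (hW : ∀ {a b}, T.Adj a b → a ∈ W) : 2 * W.card ≤ ∑ v ∈ W, (nb T v).card + 2 := by
  induction hn : W.card using Nat.strong_induction_on generalizing W T with
  | _ n ih =>
    by_cases h1 : n ≤ 1
    · omega
    by_cases hall : ∀ v ∈ W, 2 ≤ (nb T v).card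
    · have := Finset.card_nsmul_le_sum W _ 2 hall
      simp at this
      omega
    push Not at hall
    obtain ⟨q, hq, hq2⟩ := hall
    obtain ⟨p, hp⟩ := hT.exists_adj (by omega) hq
    have hcard : (nb T q).card = 1 := by
      have : 0 < (nb T q).card := Finset.card_pos.mpr ⟨p, by simpa⟩
      omega
    obtain ⟨p', hp'⟩ := Finset.card_eq_one.mp hcard
    have hc : Conn (W.erase q) (_root_.del T q) := hT.del hp.ne' (by
      intro y hy
      have h1 : y ∈ nb T q := by simpa
      have h2 : p ∈ nb T q := by simpa
      rw [hp', Finset.mem_singleton] at h1 h2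
      grind)
    have hlt := Finset.card_erase_of_mem hq
    have := ih (n - 1) (by omega) hc (by
      intro a b hab
      exact Finset.mem_erase.mpr ⟨hab.2.1, hW hab.1⟩) (by omega)
    have := sum_del hW hq
    omega

theorem TreeOn.del_leaf {W : Finset V} {T : SimpleGraph V} (h : TreeOn W T) {q p : V}
    (hq : nb T q = {p}) : TreeOn (W.erase q) (del T q) := by
  have hqp : T.Adj q p := by rw [← mem_nb, hq]; simp
  have hqW := h.mem hqp
  refine ⟨fun hab => Finset.mem_erase.mpr ⟨hab.2.1, h.mem hab.1⟩, h.conn.del hqp.ne' ?_, ?_⟩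
  · intro y hy
    left
    rw [← mem_nb, hq] at hy
    simpa using hy
  · have h1 := sum_del h.mem hqW
    have h2 := h.sum
    have h3 := Finset.card_erase_add_one hqW
    rw [hq, Finset.card_singleton] at h1
    omega

/-- The two neighbours of a vertex of degree two are not adjacent: otherwise deleting it would
leave a connected graph with too few edges. -/
theorem TreeOn.not_adj {W : Finset V} {T : SimpleGraph V} (h : TreeOn W T) {u x y : V} (hxy : x ≠ y)
    (hu : nb T u = {x, y}) : ¬ T.Adj x y := by
  intro hadj
  have hux : T.Adj u x := by rw [← mem_nb, hu]; simp
  have huW := h.mem hux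
  have hc : Conn (W.erase u) (_root_.del T u) := h.conn.del hux.ne' (by
    intro z hz
    rw [← mem_nb, hu, Finset.mem_insert, Finset.mem_singleton] at hz
    rcases hz with rfl | rfl
    · exact .inl rfl
    · exact .inr hadj)
  have h0 := hc.sum_ge (fun hab => Finset.mem_erase.mpr ⟨hab.2.1, h.mem hab.1⟩)
  have h1 := sum_del h.mem huW
  have h2 := h.sum
  have h3 := Finset.card_erase_add_one huW
  rw [hu, Finset.card_pair hxy] at h1
  omega

theorem TreeOn.card_nb_suppress {W : Finset V} {T : SimpleGraph V} (h : TreeOn W T) {u x y : V}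
    (hxy : x ≠ y) (hu : nb T u = {x, y}) {v : V} (hv : v ≠ u) :
    (nb (suppress T u x y) v).card = (nb T v).card := by
  have hn := h.not_adj hxy hu
  have hux : T.Adj u x := by rw [← mem_nb, hu]; simp
  have huy : T.Adj u y := by rw [← mem_nb, hu]; simp
  have huv : ∀ z, T.Adj u z ↔ z = x ∨ z = y := by intro z; rw [← mem_nb, hu]; simp
  by_cases h1 : v = x
  · subst h1
    have : nb (suppress T u v y) v = insert y ((nb T v).erase u) := by
      ext w
      have := huy.ne
      have := fun h : T.Adj v w => h.ne
      simp only [mem_nb, suppress, Finset.mem_insert, Finset.mem_erase]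
      grind
    rw [this, Finset.card_insert_of_notMem (by simp [hn]), Finset.card_erase_add_one]
    simpa using hux.symm
  by_cases h2 : v = y
  · subst h2
    have : nb (suppress T u x v) v = insert x ((nb T v).erase u) := by
      ext w
      have := hux.ne
      have := fun h : T.Adj v w => h.ne
      simp only [mem_nb, suppress, Finset.mem_insert, Finset.mem_erase]
      grind
    have hn' : ¬ T.Adj v x := fun h => hn h.symm
    rw [this, Finset.card_insert_of_notMem (by simp [hn']), Finset.card_erase_add_one]
    simpa using huy.symm
  · congr 1
    ext w
    have := huv v
    have := T.adj_comm u v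
    have := fun h : T.Adj v w => h.ne
    simp only [mem_nb, suppress]
    grind

theorem TreeOn.suppress {W : Finset V} {T : SimpleGraph V} (h : TreeOn W T) {u x y : V}
    (hxy : x ≠ y) (hu : nb T u = {x, y}) : TreeOn (W.erase u) (suppress T u x y) := by
  have hux : T.Adj u x := by rw [← mem_nb, hu]; simp
  have huy : T.Adj u y := by rw [← mem_nb, hu]; simp
  have huv : ∀ z, T.Adj u z ↔ z = x ∨ z = y := by intro z; rw [← mem_nb, hu]; simp
  have huW := h.mem hux
  have hxW := h.mem hux.symm
  have hyW := h.mem huy.symm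
  refine ⟨?_, ?_, ?_⟩
  · intro a b hab
    obtain ⟨h1, h2, h3, h4⟩ := hab
    refine Finset.mem_erase.mpr ⟨h1, ?_⟩
    rcases h4 with h4 | ⟨rfl, _⟩ | ⟨rfl, _⟩
    · exact h.mem h4
    · exact hxW
    · exact hyW
  · intro A hA a ha b hb
    have hAxy : A x ↔ A y := hA x y ⟨hux.ne', huy.ne', hxy, .inr (.inl ⟨rfl, rfl⟩)⟩
    have := h.conn (fun v => if v = u then A x else A v) (by
      intro a b hab
      have := hab.ne
      have := hab.symm
      have h1 := hA a b
      have h2 := huv a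
      have h3 := huv b
      simp only [_root_.suppress] at h1
      grind) a (Finset.mem_of_mem_erase ha) b (Finset.mem_of_mem_erase hb)
    have h1 := Finset.ne_of_mem_erase ha
    have h2 := Finset.ne_of_mem_erase hb
    simpa [h1, h2] using this
  · have h1 := Finset.sum_congr rfl
      (fun v (hv : v ∈ W.erase u) => h.card_nb_suppress hxy hu (Finset.ne_of_mem_erase hv))
    have h2 := h.sum
    have h3 := Finset.card_erase_add_one huW
    rw [← Finset.add_sum_erase W _ huW, hu, Finset.card_pair hxy] at h2
    omega


/-- A nonempty set of vertices closed under taking neighbours is everything. -/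
theorem TreeOn.subset_of_closed {W : Finset V} {T : SimpleGraph V} (h : TreeOn W T) {s : Finset V}
    {v : V} (hv : v ∈ s) (hvW : v ∈ W) (hs : ∀ a ∈ s, nb T a ⊆ s) : W ⊆ s := by
  intro w hw
  refine (h.conn (· ∈ s) ?_ v hvW w hw).mp hv
  intro a b hab
  have h1 := fun ha => hs a ha (mem_nb.mpr hab)
  have h2 := fun hb => hs b hb (mem_nb.mpr hab.symm)
  exact ⟨h1, h2⟩

theorem TreeOn.one_le {W : Finset V} {T : SimpleGraph V} (h : TreeOn W T) (h2 : 2 ≤ W.card)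
    {v : V} (hv : v ∈ W) : 1 ≤ (nb T v).card := by
  obtain ⟨w, hw⟩ := h.conn.exists_adj h2 hv
  exact Finset.card_pos.mpr ⟨w, by simpa⟩

theorem TreeOn.exists_leaf {W : Finset V} {T : SimpleGraph V} (h : TreeOn W T) (h2 : 2 ≤ W.card) :
    ∃ v p, nb T v = {p} := by
  by_contra! hc
  have hall : ∀ v ∈ W, 2 ≤ (nb T v).card := by
    intro v hv
    have h1 := h.one_le h2 hv
    have h3 : (nb T v).card ≠ 1 := by
      intro h3
      obtain ⟨p, hp⟩ := Finset.card_eq_one.mp h3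
      exact hc v p hp
    omega
  have := Finset.card_nsmul_le_sum W _ 2 hall
  have := h.sum
  simp at *
  omega

/-! ### Demand -/

/-- The weight `2`, `1` or `0` of a vertex of degree `1`, `2` or at least `3`; it is `3 - d` for
`1 ≤ d ≤ 3`. -/
def wt (d : ℕ) : ℕ := if d = 1 then 2 else if d = 2 then 1 else 0

/-- The demand `2 l₁ + l₂` of the tree `T` on `W`. -/
noncomputable def demand (W : Finset V) (T : SimpleGraph V) : ℕ := ∑ v ∈ W, wt (nb T v).card

theorem demand_del {W : Finset V} {T : SimpleGraph V} (h : TreeOn W T) {q p : V}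
    (hq : nb T q = {p}) :
    demand (W.erase q) (del T q) + 2 + wt (nb T p).card =
      demand W T + wt ((nb T p).card - 1) := by
  have hqp : T.Adj q p := by rw [← mem_nb, hq]; simp
  have hqW := h.mem hqp
  have hpW := h.mem hqp.symm
  have hp' : p ∈ W.erase q := Finset.mem_erase.mpr ⟨hqp.ne', hpW⟩
  unfold demand
  rw [← Finset.add_sum_erase W _ hqW, ← Finset.add_sum_erase _ _ hp',
    ← Finset.add_sum_erase (W.erase q) (fun v => wt (nb T v).card) hp', hq,
    nb_del T hqp.ne', Finset.card_erase_of_mem (by simpa using hqp.symm)]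
  have : ∀ v ∈ (W.erase q).erase p, wt (nb (del T q) v).card = wt (nb T v).card := by
    intro v hv
    simp only [Finset.mem_erase] at hv
    rw [nb_del T hv.2.1, Finset.erase_eq_of_notMem]
    intro hc
    rw [mem_nb, T.adj_comm, ← mem_nb, hq, Finset.mem_singleton] at hc
    exact hv.1 hc
  rw [Finset.sum_congr rfl this]
  simp [wt]
  ring

theorem demand_suppress {W : Finset V} {T : SimpleGraph V} (h : TreeOn W T) {u x y : V}
    (hxy : x ≠ y) (hu : nb T u = {x, y}) :
    demand (W.erase u) (suppress T u x y) + 1 = demand W T := by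
  have hux : T.Adj u x := by rw [← mem_nb, hu]; simp
  have h1 := Finset.sum_congr rfl (fun v (hv : v ∈ W.erase u) =>
    congrArg wt (h.card_nb_suppress hxy hu (Finset.ne_of_mem_erase hv)))
  unfold demand
  rw [← Finset.add_sum_erase W _ (h.mem hux), h1, hu, Finset.card_pair hxy]
  simp [wt]
  ring

/-! ### Lifting augmentations from smaller trees -/

/-- There are `n` pairs of distinct vertices of `W`, none of them an edge of `T`, whose addition
makes `T` 3-connected on `W`. The condition on `a` covers both ends of a pair, since `s(a, b)` and
`s(b, a)` are equal. -/
def HasAug (W : Finset V) (T : SimpleGraph V) (n : ℕ) : Prop :=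
  ∃ F : Finset (Sym2 V), (∀ a b, s(a, b) ∈ F → a ∈ W ∧ a ≠ b ∧ ¬ T.Adj a b) ∧
    F.card = n ∧ TC W (T ⊔ SimpleGraph.fromEdgeSet (F : Set (Sym2 V)))

theorem sup_adj {T : SimpleGraph V} {F : Finset (Sym2 V)} {a b : V} :
    (T ⊔ SimpleGraph.fromEdgeSet (F : Set (Sym2 V))).Adj a b ↔
      T.Adj a b ∨ (s(a, b) ∈ F ∧ a ≠ b) := by
  simp

/-- Restoring a leaf `q` at a vertex `p` of degree at least four costs one edge: an added edge
`ab` avoiding `p` is replaced by `aq` and `bq`. -/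
theorem HasAug.add_leaf {W : Finset V} {T : SimpleGraph V} {n : ℕ} (h : TreeOn W T)
    (h5 : 5 ≤ W.card) {q p : V} (hq : nb T q = {p}) (hp : 4 ≤ (nb T p).card)
    (H : HasAug (W.erase q) (del T q) n) : HasAug W T (n + 1) := by
  obtain ⟨F, hF, hn, hTC⟩ := H
  have hqp : T.Adj q p := by rw [← mem_nb, hq]; simp
  have hqv : ∀ z, T.Adj q z ↔ z = p := by intro z; rw [← mem_nb, hq]; simp
  have hqW := h.mem hqp
  have hpW := h.mem hqp.symm
  have hcard := Finset.card_erase_add_one hqW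
  have hTC' := hTC
  have hF2 : ∀ a b, s(a, b) ∈ F → b ∈ W.erase q := fun a b hab =>
    (hF b a (by rwa [Sym2.eq_swap])).1
  -- a leaf of the smaller tree other than `p` carries an added edge not ending in `p`
  obtain ⟨a, b, hab, hap, hbp⟩ : ∃ a b, s(a, b) ∈ F ∧ a ≠ p ∧ b ≠ p := by
    obtain ⟨a, r, ha⟩ := (h.del_leaf hq).exists_leaf (by omega)
    have har : (del T q).Adj a r := by rw [← mem_nb, ha]; simp
    have hap : a ≠ p := by
      rintro rfl
      rw [nb_del T hqp.ne'] at ha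
      have := Finset.pred_card_le_card_erase (s := nb T a) (a := q)
      rw [ha] at this
      simp at this
      omega
    obtain ⟨k, hk, hkr, hkp, hka, hak⟩ := hTC.exists_adj (by omega) ((h.del_leaf hq).mem har)
      har.ne hap
    rw [sup_adj] at hak
    rcases hak with hak | hak
    · rw [← mem_nb, ha, Finset.mem_singleton] at hak
      exact absurd hak hkr
    · exact ⟨a, k, hak.1, hap, hkp⟩
  obtain ⟨haW, hne, hnadj⟩ := hF a b hab
  have hbW := hF2 a b hab
  have haq := Finset.ne_of_mem_erase haW
  have hbq := Finset.ne_of_mem_erase hbW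
  have hqF : ∀ z, s(z, q) ∉ F := fun z hz => Finset.notMem_erase q W (hF2 z q hz)
  have hqF' : ∀ z, s(q, z) ∉ F := fun z hz => Finset.notMem_erase q W (hF q z hz).1
  refine ⟨insert s(a, q) (insert s(b, q) (F.erase s(a, b))), ?_, ?_, ?_⟩
  · intro c d hcd
    simp only [Finset.mem_insert, Finset.mem_erase, Sym2.eq_iff] at hcd
    have h1 := Finset.mem_of_mem_erase haW
    have h2 := Finset.mem_of_mem_erase hbW
    have h3 := T.adj_comm
    rcases hcd with (⟨rfl, rfl⟩ | ⟨rfl, rfl⟩) | (⟨rfl, rfl⟩ | ⟨rfl, rfl⟩) | ⟨_, h4⟩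
    · exact ⟨h1, haq, by rw [h3, hqv]; exact hap⟩
    · exact ⟨hqW, haq.symm, by rw [hqv]; exact hap⟩
    · exact ⟨h2, hbq, by rw [h3, hqv]; exact hbp⟩
    · exact ⟨hqW, hbq.symm, by rw [hqv]; exact hbp⟩
    · obtain ⟨h5, h6, h7⟩ := hF c d h4
      have h8 := hF2 c d h4
      simp only [Finset.mem_erase] at h5 h8
      exact ⟨h5.2, h6, fun hc => h7 ⟨hc, h5.1, h8.1⟩⟩
  · rw [Finset.card_insert_of_notMem, Finset.card_insert_of_notMem, Finset.card_erase_add_one hab, hn]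
    · simp [hqF]
    · simp only [Finset.mem_insert, Finset.mem_erase, hqF, Sym2.eq_iff]
      grind
  · rw [← Finset.insert_erase hqW]
    refine hTC.subdivide (by omega) (Finset.notMem_erase q W) haW hbW
      (Finset.mem_erase.mpr ⟨hqp.ne', hpW⟩) hne hap hbp ?_ ?_ ?_ ?_
    · rw [sup_adj]; right; simp [Sym2.eq_swap, haq.symm]
    · rw [sup_adj]; right; simp [Sym2.eq_swap, hbq.symm]
    · rw [sup_adj]; exact .inl hqp
    · intro c d hcd
      rw [sup_adj] at hcd ⊢
      rcases hcd with hcd | ⟨hcd, hcd'⟩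
      · exact .inl (.inl hcd.1)
      · by_cases he : s(c, d) = s(a, b)
        · rw [Sym2.eq_iff] at he
          exact .inr he
        · left; right
          simp [he, hcd, hcd']

/-- Restoring two leaves `q`, `r` at a vertex `p` of degree three costs one edge: two added edges
`pb`, `pc` are replaced by `qb`, `rc`, `qr`. In other words `q` and `r` subdivide `pb` and `pc`,
the tree edges `pq` and `pr` being halves of the subdivided edges. -/
theorem HasAug.add_cherry {W : Finset V} {T : SimpleGraph V} {n : ℕ} (h : TreeOn W T)
    (h6 : 6 ≤ W.card) {q r p : V} (hqr : q ≠ r) (hq : nb T q = {p}) (hr : nb T r = {p})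
    (hp : (nb T p).card = 3)
    (H : HasAug ((W.erase q).erase r) (del (del T q) r) n) : HasAug W T (n + 1) := by
  obtain ⟨F, hF, hn, hTC⟩ := H
  have hqp : T.Adj q p := by rw [← mem_nb, hq]; simp
  have hrp : T.Adj r p := by rw [← mem_nb, hr]; simp
  have hqv : ∀ z, T.Adj q z ↔ z = p := by intro z; rw [← mem_nb, hq]; simp
  have hrv : ∀ z, T.Adj r z ↔ z = p := by intro z; rw [← mem_nb, hr]; simp
  have hqW := h.mem hqp
  have hrW := h.mem hrp
  have hrW' : r ∈ W.erase q := Finset.mem_erase.mpr ⟨hqr.symm, hrW⟩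
  have hpW : p ∈ (W.erase q).erase r := by
    simp only [Finset.mem_erase]
    exact ⟨hrp.ne', hqp.ne', h.mem hqp.symm⟩
  have hcard := Finset.card_erase_add_one hqW
  have hcard2 := Finset.card_erase_add_one hrW'
  have hF2 : ∀ a b, s(a, b) ∈ F → b ∈ (W.erase q).erase r := fun a b hab =>
    (hF b a (by rwa [Sym2.eq_swap])).1
  obtain ⟨t, ht⟩ : ∃ t, nb (del (del T q) r) p = {t} := by
    rw [← Finset.card_eq_one, nb_del _ hrp.ne', nb_del _ hqp.ne', Finset.card_erase_of_mem,
      Finset.card_erase_of_mem, hp]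
    · simpa using hqp.symm
    · simp [hqr.symm, hrp.symm]
  have hpt : (del (del T q) r).Adj p t := by rw [← mem_nb, ht]; simp
  -- `p` is a leaf of the smaller tree, hence carries two added edges
  have key : ∀ s, p ≠ s → ∃ k, k ≠ s ∧ s(p, k) ∈ F := by
    intro s hps
    obtain ⟨k, hk, hkt, hks, hkp, hpk⟩ := hTC.exists_adj (by omega) hpW hpt.ne hps
    rw [sup_adj] at hpk
    rcases hpk with hpk | hpk
    · rw [← mem_nb, ht, Finset.mem_singleton] at hpk
      exact absurd hpk hkt
    · exact ⟨k, hks, hpk.1⟩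
  obtain ⟨b, _, hb⟩ := key t hpt.ne
  obtain ⟨c, hcb, hc⟩ := key b (hF p b hb).2.1
  obtain ⟨-, hpb, hpb'⟩ := hF p b hb
  obtain ⟨-, hpc, hpc'⟩ := hF p c hc
  have hbW := hF2 p b hb
  have hcW := hF2 p c hc
  have hqN : q ∉ (W.erase q).erase r := by simp
  have hrN : r ∉ (W.erase q).erase r := by simp
  have hqF : ∀ z, s(z, q) ∉ F := fun z hz => hqN (hF2 z q hz)
  have hqF' : ∀ z, s(q, z) ∉ F := fun z hz => hqN (hF q z hz).1
  have hrF : ∀ z, s(z, r) ∉ F := fun z hz => hrN (hF2 z r hz)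
  have hrF' : ∀ z, s(r, z) ∉ F := fun z hz => hrN (hF r z hz).1
  have hb' := hbW
  have hc' := hcW
  simp only [Finset.mem_erase] at hb' hc'
  have hadj := T.adj_comm
  have hqrn : ¬ T.Adj q r := by rw [hqv]; exact hrp.ne
  refine ⟨insert s(q, r) (insert s(q, b) (insert s(r, c) ((F.erase s(p, b)).erase s(p, c)))),
    ?_, ?_, ?_⟩
  · intro d e hde
    simp only [Finset.mem_insert, Finset.mem_erase, Sym2.eq_iff] at hde
    rcases hde with (⟨rfl, rfl⟩ | ⟨rfl, rfl⟩) | (⟨rfl, rfl⟩ | ⟨rfl, rfl⟩) |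
      (⟨rfl, rfl⟩ | ⟨rfl, rfl⟩) | ⟨_, _, h4⟩
    · exact ⟨hqW, hqr, hqrn⟩
    · exact ⟨hrW, hqr.symm, by rwa [hadj]⟩
    · exact ⟨hqW, hb'.2.1.symm, by rw [hqv]; exact hpb.symm⟩
    · exact ⟨hb'.2.2, hb'.2.1, by rw [hadj, hqv]; exact hpb.symm⟩
    · exact ⟨hrW, hc'.1.symm, by rw [hrv]; exact hpc.symm⟩
    · exact ⟨hc'.2.2, hc'.1, by rw [hadj, hrv]; exact hpc.symm⟩
    · obtain ⟨h5, h6, h7⟩ := hF d e h4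
      have h8 := hF2 d e h4
      simp only [Finset.mem_erase] at h5 h8
      exact ⟨h5.2.2, h6, fun hc => h7 ⟨⟨hc, h5.2.1, h8.2.1⟩, h5.1, h8.1⟩⟩
  · have h1 := Finset.card_erase_add_one hb
    have h2 : ((F.erase s(p, b)).erase s(p, c)).card + 1 = (F.erase s(p, b)).card := by
      apply Finset.card_erase_add_one
      simp only [Finset.mem_erase, hc, and_true]
      grind
    rw [Finset.card_insert_of_notMem, Finset.card_insert_of_notMem, Finset.card_insert_of_notMem]
    · omega
    · simp [hrF']
    · simp only [Finset.mem_insert, Finset.mem_erase, hqF', Sym2.eq_iff]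
      grind
    · simp only [Finset.mem_insert, Finset.mem_erase, hqF', Sym2.eq_iff]
      grind
  · rw [← Finset.insert_erase hqW, ← Finset.insert_erase hrW']
    refine hTC.bridge (by omega) (x := p) (y := b) (w := c) (z := p) hqN hrN hpW hbW hcW hpW hpb
      hpc.symm hpc.symm hcb ?_ ?_ ?_ ?_ ?_ ?_
    · rw [sup_adj]; exact .inl hqp
    · rw [sup_adj]; right; simp [hb'.2.1.symm]
    · rw [sup_adj]; right; simp [hqr]
    · rw [sup_adj]; right; simp [hc'.1.symm]
    · rw [sup_adj]; exact .inl hrp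
    · intro d e hde
      rw [sup_adj] at hde ⊢
      rcases hde with hde | ⟨hde, hde'⟩
      · exact .inl (.inl hde.1.1)
      · by_cases he : s(d, e) = s(p, b)
        · rw [Sym2.eq_iff] at he
          tauto
        by_cases he' : s(d, e) = s(p, c)
        · rw [Sym2.eq_iff] at he'
          tauto
        left; right
        simp [he, he', hde, hde']

/-- Restoring a vertex `u` of degree two costs one edge, joining `u` to a third vertex. -/
theorem HasAug.unsuppress {W : Finset V} {T : SimpleGraph V} {n : ℕ} (h : TreeOn W T)
    (h5 : 5 ≤ W.card) {u x y : V} (hxy : x ≠ y) (hu : nb T u = {x, y})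
    (H : HasAug (W.erase u) (suppress T u x y) n) : HasAug W T (n + 1) := by
  obtain ⟨F, hF, hn, hTC⟩ := H
  have hux : T.Adj u x := by rw [← mem_nb, hu]; simp
  have huy : T.Adj u y := by rw [← mem_nb, hu]; simp
  have huv : ∀ z, T.Adj u z ↔ z = x ∨ z = y := by intro z; rw [← mem_nb, hu]; simp
  have huW := h.mem hux
  have hxW : x ∈ W.erase u := Finset.mem_erase.mpr ⟨hux.ne', h.mem hux.symm⟩
  have hyW : y ∈ W.erase u := Finset.mem_erase.mpr ⟨huy.ne', h.mem huy.symm⟩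
  have hcard := Finset.card_erase_add_one huW
  have huN : u ∉ W.erase u := by simp
  obtain ⟨w, hw, hwx, hwy, -⟩ := exists_fourth (by omega : 4 ≤ (W.erase u).card) x y y
  have hw' := Finset.mem_erase.mp hw
  have hF2 : ∀ a b, s(a, b) ∈ F → b ∈ W.erase u := fun a b hab =>
    (hF b a (by rwa [Sym2.eq_swap])).1
  refine ⟨insert s(u, w) F, ?_, ?_, ?_⟩
  · intro a b hab
    simp only [Finset.mem_insert, Sym2.eq_iff] at hab
    rcases hab with (⟨rfl, rfl⟩ | ⟨rfl, rfl⟩) | hab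
    · exact ⟨huW, hw'.1.symm, by rw [huv]; tauto⟩
    · exact ⟨hw'.2, hw'.1, by rw [T.adj_comm, huv]; tauto⟩
    · obtain ⟨h1, h2, h3⟩ := hF a b hab
      have h4 := hF2 a b hab
      rw [Finset.mem_erase] at h1 h4
      exact ⟨h1.2, h2, fun hc => h3 ⟨h1.1, h4.1, h2, .inl hc⟩⟩
  · rw [Finset.card_insert_of_notMem, hn]
    exact fun hc => huN (hF _ _ hc).1
  · rw [← Finset.insert_erase huW]
    refine hTC.subdivide (by omega) huN hxW hyW hw hxy hwx.symm hwy.symm ?_ ?_ ?_ ?_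
    · rw [sup_adj]; exact .inl hux
    · rw [sup_adj]; exact .inl huy
    · rw [sup_adj]; right; simp [hw'.1.symm]
    · intro a b hab
      rw [sup_adj] at hab ⊢
      rcases hab with ⟨_, _, _, hab⟩ | hab
      · tauto
      · left; right; simp [hab.1, hab.2]

theorem nb_suppress_of_not_adj {T : SimpleGraph V} {u x y v : V}
    (hu : nb T u = {x, y}) (huv : ¬ T.Adj u v) (hne : u ≠ v) :
    nb (suppress T u x y) v = nb T v := by
  have hux : T.Adj u x := by rw [← mem_nb, hu]; simp
  have huy : T.Adj u y := by rw [← mem_nb, hu]; simp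
  have hvu : ¬ T.Adj v u := fun hc => huv hc.symm
  have hvx : v ≠ x := by rintro rfl; exact huv hux
  have hvy : v ≠ y := by rintro rfl; exact huv huy
  ext w
  simp only [mem_nb, suppress]
  constructor
  · tauto
  · intro hvw
    exact ⟨hne.symm, by rintro rfl; exact hvu hvw, hvw.ne, .inl hvw⟩

theorem suppress_comm (T : SimpleGraph V) (u x y : V) : suppress T u x y = suppress T u y x := by
  ext a b
  simp only [suppress]
  tauto

/-- Restoring two nonadjacent vertices `u`, `v` of degree two costs only one edge, namely `uv`. -/
theorem HasAug.unsuppress_two {W : Finset V} {T : SimpleGraph V} {n : ℕ} (h : TreeOn W T)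
    (h6 : 6 ≤ W.card) {u v x y w z : V} (hxy : x ≠ y) (hwz : w ≠ z) (hu : nb T u = {x, y})
    (hv : nb T v = {w, z}) (huv : u ≠ v) (hnadj : ¬ T.Adj u v)
    (H : HasAug ((W.erase u).erase v) (suppress (suppress T u x y) v w z) n) :
    HasAug W T (n + 1) := by
  -- `w` and `z` are not both in `{x, y}`, since otherwise the neighbours `w`, `z` of `v` would be
  -- adjacent once `u` is suppressed
  wlog hw : w ≠ x ∧ w ≠ y generalizing w z with Hw
  · refine Hw hwz.symm (by rw [hv, Finset.pair_comm]) ?_ ?_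
    · rw [suppress_comm]
      exact H
    · by_contra hz
      have hux : T.Adj u x := by rw [← mem_nb, hu]; simp
      have huy : T.Adj u y := by rw [← mem_nb, hu]; simp
      have h1 := (h.suppress hxy hu).not_adj hwz
        (by rw [nb_suppress_of_not_adj hu hnadj huv, hv])
      apply h1
      have h2 := hux.ne'
      have h3 := huy.ne'
      simp only [suppress]
      grind
  obtain ⟨hwx, hwy⟩ := hw
  obtain ⟨F, hF, hn, hTC⟩ := H
  have hux : T.Adj u x := by rw [← mem_nb, hu]; simp
  have huy : T.Adj u y := by rw [← mem_nb, hu]; simp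
  have hvw : T.Adj v w := by rw [← mem_nb, hv]; simp
  have hvz : T.Adj v z := by rw [← mem_nb, hv]; simp
  have hvu : ¬ T.Adj v u := fun hc => hnadj hc.symm
  have huW := h.mem hux
  have hvW : v ∈ W.erase u := Finset.mem_erase.mpr ⟨huv.symm, h.mem hvw⟩
  have memW : ∀ a, T.Adj u a ∨ T.Adj v a → a ∈ (W.erase u).erase v := by
    intro a ha
    simp only [Finset.mem_erase]
    rcases ha with ha | ha
    · exact ⟨by rintro rfl; exact hnadj ha, ha.ne', h.mem ha.symm⟩
    · exact ⟨ha.ne', by rintro rfl; exact hvu ha, h.mem ha.symm⟩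
  have hcard := Finset.card_erase_add_one huW
  have hcard2 := Finset.card_erase_add_one hvW
  have huN : u ∉ (W.erase u).erase v := by simp
  have hvN : v ∉ (W.erase u).erase v := by simp
  have hF2 : ∀ a b, s(a, b) ∈ F → b ∈ (W.erase u).erase v := fun a b hab =>
    (hF b a (by rwa [Sym2.eq_swap])).1
  refine ⟨insert s(u, v) F, ?_, ?_, ?_⟩
  · intro a b hab
    simp only [Finset.mem_insert, Sym2.eq_iff] at hab
    rcases hab with (⟨rfl, rfl⟩ | ⟨rfl, rfl⟩) | hab
    · exact ⟨huW, huv, hnadj⟩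
    · exact ⟨Finset.mem_of_mem_erase hvW, huv.symm, hvu⟩
    · obtain ⟨h1, h2, h3⟩ := hF a b hab
      have h4 := hF2 a b hab
      simp only [Finset.mem_erase] at h1 h4
      exact ⟨h1.2.2, h2, fun hc => h3 ⟨h1.1, h4.1, h2, .inl ⟨h1.2.1, h4.2.1, h2, .inl hc⟩⟩⟩
  · rw [Finset.card_insert_of_notMem, hn]
    exact fun hc => huN (hF _ _ hc).1
  · rw [← Finset.insert_erase huW, ← Finset.insert_erase hvW]
    refine hTC.bridge (by omega) huN hvN (memW x (.inl hux)) (memW y (.inl huy))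
      (memW w (.inr hvw)) (memW z (.inr hvz)) hxy hwz hwx hwy ?_ ?_ ?_ ?_ ?_ ?_
    · rw [sup_adj]; exact .inl hux
    · rw [sup_adj]; exact .inl huy
    · rw [sup_adj]; right; simp [huv]
    · rw [sup_adj]; exact .inl hvw
    · rw [sup_adj]; exact .inl hvz
    · intro a b hab
      rw [sup_adj] at hab ⊢
      rcases hab with ⟨_, _, _, ⟨_, _, _, hab⟩ | hab⟩ | hab
      · tauto
      · tauto
      · left; right; simp [hab.1, hab.2]

/-! ### Existence of a reduction -/

/-- On four vertices all non-edges are added. The number of non-edges at a vertex of degree `d` is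
`3 - d`, its weight, so by double counting there are `D / 2` of them. -/
theorem HasAug.base {W : Finset V} {T : SimpleGraph V} (h : TreeOn W T) (h4 : W.card = 4) :
    HasAug W T ((demand W T + 1) / 2) := by
  let H : SimpleGraph V :=
    { Adj := fun a b => a ∈ W ∧ b ∈ W ∧ a ≠ b ∧ ¬ T.Adj a b
      symm := ⟨fun a b hab => ⟨hab.2.1, hab.1, hab.2.2.1.symm, fun hc => hab.2.2.2 hc.symm⟩⟩
      loopless := ⟨fun a ha => ha.2.2.1 rfl⟩ }
  have hsub : ∀ v ∈ W, nb T v ⊆ W.erase v := by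
    intro v _ w hw
    rw [mem_nb] at hw
    exact Finset.mem_erase.mpr ⟨hw.ne', h.mem hw.symm⟩
  have hle : ∀ v ∈ W, (nb T v).card ≤ 3 := by
    intro v hv
    have h1 := Finset.card_le_card (hsub v hv)
    have h2 := Finset.card_erase_add_one hv
    omega
  have hdegH : ∀ v ∈ W, (nb H v).card + (nb T v).card = 3 := by
    intro v hv
    have h1 : nb H v = W.erase v \ nb T v := by
      ext w
      simp only [mem_nb, Finset.mem_sdiff, Finset.mem_erase, H]
      tauto
    have h2 := Finset.card_erase_add_one hv
    have h3 := Finset.card_sdiff_add_card_eq_card (hsub v hv)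
    rw [h1]
    omega
  have hwt : ∀ v ∈ W, wt (nb T v).card = (nb H v).card := by
    intro v hv
    have h1 := hdegH v hv
    have h2 := h.one_le (by omega) hv
    unfold wt
    split_ifs <;> omega
  have hsumH : ∑ v ∈ W, (nb H v).card = 2 * H.edgeFinset.card := by
    rw [← H.sum_degrees_eq_twice_card_edges]
    have : ∀ v, H.degree v = (nb H v).card := by
      intro v
      rw [← SimpleGraph.card_neighborFinset_eq_degree]
      congr 1
      ext w
      simp
    simp only [this]
    apply Finset.sum_subset (Finset.subset_univ W)
    intro v _ hv
    rw [Finset.card_eq_zero, Finset.eq_empty_iff_forall_notMem]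
    intro w hw
    rw [mem_nb] at hw
    exact hv hw.1
  refine ⟨H.edgeFinset, ?_, ?_, ?_⟩
  · intro a b hab
    rw [SimpleGraph.mem_edgeFinset, SimpleGraph.mem_edgeSet] at hab
    exact ⟨hab.1, hab.2.2⟩
  · have : demand W T = 2 * H.edgeFinset.card := by
      rw [← hsumH]
      exact Finset.sum_congr rfl hwt
    omega
  · intro s t A hA a ha b hb has hat hbs hbt
    by_cases hab : a = b
    · rw [hab]
    refine hA a ha b hb has hat hbs hbt ?_
    rw [sup_adj, SimpleGraph.mem_edgeFinset, SimpleGraph.mem_edgeSet]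
    by_cases hT : T.Adj a b
    · exact .inl hT
    · exact .inr ⟨⟨ha, hb, hab, hT⟩, hab⟩

/-- A leaf is not attached to another leaf, as the two would form a connected component. -/
theorem TreeOn.two_le_parent {W : Finset V} {T : SimpleGraph V} (h : TreeOn W T)
    (h3 : 3 ≤ W.card) {q p : V} (hq : nb T q = {p}) : 2 ≤ (nb T p).card := by
  have hqp : T.Adj q p := by rw [← mem_nb, hq]; simp
  have h1 := h.one_le (by omega) (h.mem hqp.symm)
  by_contra hlt
  obtain ⟨x, hx⟩ := Finset.card_eq_one.mp (by omega : (nb T p).card = 1)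
  have hxq : q ∈ nb T p := by simpa using hqp.symm
  rw [hx, Finset.mem_singleton] at hxq
  subst hxq
  have := Finset.card_le_card (h.subset_of_closed (s := {q, p}) (v := q) (by simp) (h.mem hqp) (by
    intro a ha
    simp only [Finset.mem_insert, Finset.mem_singleton] at ha
    rcases ha with rfl | rfl
    · rw [hq]; simp
    · rw [hx]; simp))
  have := Finset.card_le_two (a := q) (b := p)
  omega

/-- A vertex with two leaf neighbours has a third neighbour, as otherwise the three vertices
would form a connected component. -/
theorem TreeOn.three_le_parent {W : Finset V} {T : SimpleGraph V} (h : TreeOn W T)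
    (h4 : 4 ≤ W.card) {q r p : V} (hqr : q ≠ r) (hq : nb T q = {p}) (hr : nb T r = {p}) :
    3 ≤ (nb T p).card := by
  have hqp : T.Adj q p := by rw [← mem_nb, hq]; simp
  have hrp : T.Adj r p := by rw [← mem_nb, hr]; simp
  by_contra hlt
  have hsub : ({q, r} : Finset V) ⊆ nb T p := by
    intro a ha
    simp only [Finset.mem_insert, Finset.mem_singleton] at ha
    rw [mem_nb]
    rcases ha with rfl | rfl
    · exact hqp.symm
    · exact hrp.symm
  have hp := Finset.eq_of_subset_of_card_le hsub (by rw [Finset.card_pair hqr]; omega)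
  have := Finset.card_le_card (h.subset_of_closed (s := {q, r, p}) (v := q) (by simp)
    (h.mem hqp) (by
    intro a ha
    simp only [Finset.mem_insert, Finset.mem_singleton] at ha
    rcases ha with rfl | rfl | rfl
    · rw [hq]; simp
    · rw [hr]; simp
    · rw [← hp]
      intro b hb
      simp only [Finset.mem_insert, Finset.mem_singleton] at hb ⊢
      tauto))
  have := Finset.card_le_three (a := q) (b := r) (c := p)
  omega

/-- Two vertices of degree two that both have a leaf neighbour are not adjacent, as otherwise the
tree would be a path on four vertices. -/
theorem TreeOn.not_adj_parents {W : Finset V} {T : SimpleGraph V} (h : TreeOn W T)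
    (h5 : 5 ≤ W.card) {u v q r : V} (hu : (nb T u).card = 2) (hv : (nb T v).card = 2)
    (hq : nb T q = {u}) (hr : nb T r = {v}) : ¬ T.Adj u v := by
  intro huv
  have hqu : T.Adj q u := by rw [← mem_nb, hq]; simp
  have hrv : T.Adj r v := by rw [← mem_nb, hr]; simp
  have hqv : q ≠ v := by
    rintro rfl
    rw [hq] at hv
    simp at hv
  have hru : r ≠ u := by
    rintro rfl
    rw [hr] at hu
    simp at hu
  have key : ∀ {a b c : V}, T.Adj a b → T.Adj a c → b ≠ c → (nb T a).card = 2 →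
      nb T a = {b, c} := by
    intro a b c hab hac hbc ha
    refine (Finset.eq_of_subset_of_card_le ?_ (by rw [Finset.card_pair hbc]; omega)).symm
    intro z hz
    simp only [Finset.mem_insert, Finset.mem_singleton] at hz
    rw [mem_nb]
    rcases hz with rfl | rfl <;> assumption
  have hu' := key hqu.symm huv hqv hu
  have hv' := key hrv.symm huv.symm hru hv
  have := Finset.card_le_card (h.subset_of_closed (s := {q, u, v, r}) (v := q) (by simp)
    (h.mem hqu) (by
    intro a ha
    simp only [Finset.mem_insert, Finset.mem_singleton] at ha
    intro b hb
    simp only [Finset.mem_insert, Finset.mem_singleton]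
    rcases ha with rfl | rfl | rfl | rfl
    · rw [hq] at hb; simp at hb; tauto
    · rw [hu'] at hb; simp at hb; tauto
    · rw [hv'] at hb; simp at hb; tauto
    · rw [hr] at hb; simp at hb; tauto))
  have := Finset.card_le_four (a := q) (b := u) (c := v) (d := r)
  omega

/-- If no leaf hangs at a vertex of degree at least four and no two leaves hang at a vertex of
degree three, then there are two nonadjacent vertices of degree two. -/
theorem TreeOn.exists_two {W : Finset V} {T : SimpleGraph V} (h : TreeOn W T)
    (h5 : 5 ≤ W.card) (h1 : ∀ q p, nb T q = {p} → (nb T p).card < 4)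
    (h2 : ∀ q r p, q ≠ r → nb T q = {p} → nb T r = {p} → (nb T p).card ≠ 3) :
    ∃ u v, u ≠ v ∧ (nb T u).card = 2 ∧ (nb T v).card = 2 ∧ ¬ T.Adj u v := by
  set L := W.filter (fun v => (nb T v).card = 1) with hL
  set I := W.filter (fun v => (nb T v).card = 2 ∧ ∃ q, nb T q = {v}) with hI
  set B := W.filter (fun v => 3 ≤ (nb T v).card) with hB
  -- from the degree sum `2 |W| - 2`
  have hleaf : B.card + 2 ≤ L.card := by
    have hle : ∑ v ∈ W, (2 + if 3 ≤ (nb T v).card then 1 else 0) ≤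
        ∑ v ∈ W, ((nb T v).card + if (nb T v).card = 1 then 1 else 0) := by
      apply Finset.sum_le_sum
      intro v hv
      have := h.one_le (by omega) hv
      split_ifs <;> omega
    rw [Finset.sum_add_distrib, Finset.sum_add_distrib, ← Finset.card_filter,
      ← Finset.card_filter] at hle
    have := h.sum
    simp only [Finset.sum_const, smul_eq_mul] at hle
    rw [hL, hB]
    omega
  -- each leaf has its own neighbour, of degree two or at least three
  have hpar : L.card ≤ (I ∪ B).card := by
    apply Finset.card_le_card_of_forall_subsingleton (fun q p => nb T q = {p})
    · intro q hq
      obtain ⟨hqW, hq1⟩ := Finset.mem_filter.mp hq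
      obtain ⟨p, hp⟩ := Finset.card_eq_one.mp hq1
      have hqp : T.Adj q p := by rw [← mem_nb, hp]; simp
      have hpW := h.mem hqp.symm
      have h3 := h.two_le_parent (by omega) hp
      refine ⟨p, ?_, hp⟩
      simp only [hI, hB, Finset.mem_union, Finset.mem_filter]
      by_cases h4 : (nb T p).card = 2
      · exact .inl ⟨hpW, h4, q, hp⟩
      · exact .inr ⟨hpW, by omega⟩
    · intro p _ q hq r hr
      by_contra hqr
      have h3 := h.three_le_parent (by omega) hqr hq.2 hr.2
      have h4 := h1 q p hq.2
      have h5 := h2 q r p hqr hq.2 hr.2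
      omega
  have hcu := Finset.card_union_le I B
  obtain ⟨u, hu, v, hv, huv⟩ := Finset.one_lt_card.mp (by omega : 1 < I.card)
  obtain ⟨-, hu2, q, hq⟩ := Finset.mem_filter.mp hu
  obtain ⟨-, hv2, r, hr⟩ := Finset.mem_filter.mp hv
  exact ⟨u, v, huv, hu2, hv2, h.not_adj_parents h5 hu2 hv2 hq hr⟩

/-- A tree on five vertices with even demand is a star: if all degrees are at most three, the
demand is `15 - 8 = 7`. -/
theorem TreeOn.exists_big_leaf {W : Finset V} {T : SimpleGraph V} (h : TreeOn W T)
    (h5 : W.card = 5) (heven : demand W T % 2 = 0) :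
    ∃ q p, nb T q = {p} ∧ 4 ≤ (nb T p).card := by
  have hone := fun v (hv : v ∈ W) => h.one_le (by omega) hv
  obtain ⟨p, hp, hp4⟩ : ∃ p ∈ W, 4 ≤ (nb T p).card := by
    by_contra! hc
    have h1 : demand W T + ∑ v ∈ W, (nb T v).card = ∑ v ∈ W, 3 := by
      unfold demand
      rw [← Finset.sum_add_distrib]
      apply Finset.sum_congr rfl
      intro v hv
      have := hone v hv
      have := hc v hv
      unfold wt
      split_ifs <;> omega
    have := h.sum
    simp only [Finset.sum_const, smul_eq_mul] at h1
    omega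
  obtain ⟨q, hq⟩ := h.conn.exists_adj (by omega) hp
  have hqW := h.mem hq.symm
  have hqp : q ∈ W.erase p := Finset.mem_erase.mpr ⟨hq.ne', hqW⟩
  have h2 := h.sum
  rw [← Finset.add_sum_erase W _ hp, ← Finset.add_sum_erase _ _ hqp] at h2
  have h3 := Finset.card_nsmul_le_sum ((W.erase p).erase q) (fun v => (nb T v).card) 1 (by
    intro v hv
    exact hone v (Finset.mem_of_mem_erase (Finset.mem_of_mem_erase hv)))
  have h4 := Finset.card_erase_add_one hp
  have h6 := Finset.card_erase_add_one hqp
  have h7 := hone q hqW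
  simp only [smul_eq_mul, mul_one] at h3
  obtain ⟨p', hp'⟩ := Finset.card_eq_one.mp (by omega : (nb T q).card = 1)
  have h8 : p ∈ nb T q := by simpa using hq.symm
  rw [hp', Finset.mem_singleton] at h8
  subst h8
  exact ⟨q, p, hp', hp4⟩

/-! ### The induction -/

/-- Every tree on at least four vertices has a 3-connected augmentation by `⌈D / 2⌉` edges. -/
theorem TreeOn.hasAug {W : Finset V} {T : SimpleGraph V} (h : TreeOn W T) (h4 : 4 ≤ W.card) :
    HasAug W T ((demand W T + 1) / 2) := by
  induction hn : W.card using Nat.strong_induction_on generalizing W T with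
  | _ n ih =>
  subst hn
  by_cases hbase : W.card = 4
  · exact HasAug.base h hbase
  have h5 : 5 ≤ W.card := by omega
  by_cases hodd : demand W T % 2 = 1
  · -- without vertices of degree two all weights are even
    obtain ⟨u, huW, hu⟩ : ∃ u ∈ W, (nb T u).card = 2 := by
      by_contra! hc
      have : 2 ∣ demand W T := by
        apply Finset.dvd_sum
        intro v hv
        have := hc v hv
        unfold wt
        split_ifs <;> simp
      omega
    obtain ⟨x, y, hxy, hu⟩ := Finset.card_eq_two.mp hu
    have hc := Finset.card_erase_add_one huW
    have hd := demand_suppress h hxy hu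
    have := HasAug.unsuppress h h5 hxy hu
      (ih _ (by omega) (h.suppress hxy hu) (by omega) rfl)
    convert this using 1
    omega
  by_cases hi : ∃ q p, nb T q = {p} ∧ 4 ≤ (nb T p).card
  · obtain ⟨q, p, hq, hp⟩ := hi
    have hqp : T.Adj q p := by rw [← mem_nb, hq]; simp
    have hc := Finset.card_erase_add_one (h.mem hqp)
    have hd := demand_del h hq
    have h1 : wt (nb T p).card = 0 := by unfold wt; split_ifs <;> omega
    have h2 : wt ((nb T p).card - 1) = 0 := by unfold wt; split_ifs <;> omega
    have := HasAug.add_leaf h h5 hq hp (ih _ (by omega) (h.del_leaf hq) (by omega) rfl)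
    convert this using 1
    omega
  have h6 : 6 ≤ W.card := by
    by_contra hlt
    exact hi (h.exists_big_leaf (by omega) (by omega))
  push Not at hi
  by_cases hii : ∃ q r p, q ≠ r ∧ nb T q = {p} ∧ nb T r = {p} ∧ (nb T p).card = 3
  · obtain ⟨q, r, p, hqr, hq, hr, hp⟩ := hii
    have hqp : T.Adj q p := by rw [← mem_nb, hq]; simp
    have hrp : T.Adj r p := by rw [← mem_nb, hr]; simp
    have hrW : r ∈ W.erase q := Finset.mem_erase.mpr ⟨hqr.symm, h.mem hrp⟩
    have hc := Finset.card_erase_add_one (h.mem hqp)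
    have hc2 := Finset.card_erase_add_one hrW
    have hd := demand_del h hq
    have h' := h.del_leaf hq
    have hr' : nb (del T q) r = {p} := by
      rw [nb_del T hqr.symm, hr, Finset.erase_eq_of_notMem]
      simpa using hqp.ne
    have hp' : (nb (del T q) p).card = 2 := by
      rw [nb_del T hqp.ne', Finset.card_erase_of_mem (by simpa using hqp.symm), hp]
    have hd2 := demand_del h' hr'
    have := HasAug.add_cherry h h6 hqr hq hr hp
      (ih _ (by omega) (h'.del_leaf hr') (by omega) rfl)
    rw [hp] at hd
    rw [hp'] at hd2
    simp only [wt] at hd hd2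
    norm_num at hd hd2
    convert this using 1
    omega
  push Not at hii
  obtain ⟨u, v, huv, hu, hv, hadj⟩ := h.exists_two h5 hi (by
    intro q r p hqr hq hr
    exact hii q r p hqr hq hr)
  obtain ⟨x, y, hxy, hu⟩ := Finset.card_eq_two.mp hu
  obtain ⟨w, z, hwz, hv⟩ := Finset.card_eq_two.mp hv
  have hux : T.Adj u x := by rw [← mem_nb, hu]; simp
  have hvw : T.Adj v w := by rw [← mem_nb, hv]; simp
  have hvW : v ∈ W.erase u := Finset.mem_erase.mpr ⟨huv.symm, h.mem hvw⟩
  have hc := Finset.card_erase_add_one (h.mem hux)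
  have hc2 := Finset.card_erase_add_one hvW
  have h' := h.suppress hxy hu
  have hv' : nb (_root_.suppress T u x y) v = {w, z} := by
    rw [nb_suppress_of_not_adj hu hadj huv, hv]
  have hd := demand_suppress h hxy hu
  have hd2 := demand_suppress h' hwz hv'
  have := HasAug.unsuppress_two h h6 hxy hwz hu hv huv hadj
    (ih _ (by omega) (h'.suppress hwz hv') (by omega) rfl)
  convert this using 1
  omega

/-! ### Translation to Mathlib notions -/

theorem card_nb (T : SimpleGraph V) (v : V) : (nb T v).card = degN T v := by
  rw [degN, ← Set.ncard_coe_finset]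
  congr 1
  ext w
  simp

theorem SimpleGraph.IsTree.treeOn {T : SimpleGraph V} (hT : T.IsTree) :
    TreeOn Finset.univ T := by
  refine ⟨fun _ => Finset.mem_univ _, ?_, ?_⟩
  · intro A hA a _ b _
    obtain ⟨p⟩ := hT.connected.preconnected a b
    induction p with
    | nil => rfl
    | cons hab _ ih => exact (hA _ _ hab).trans (ih (Finset.mem_univ _) (Finset.mem_univ _))
  · have h1 := T.sum_degrees_eq_twice_card_edges
    have h2 := hT.card_edgeFinset
    have h3 : ∀ v, T.degree v = (nb T v).card := by
      intro v
      rw [← SimpleGraph.card_neighborFinset_eq_degree]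
      congr 1
      ext w
      simp
    simp only [h3] at h1
    rw [h1, Finset.card_univ]
    omega

theorem demand_univ (T : SimpleGraph V) :
    demand Finset.univ T = 2 * (Finset.univ.filter (fun v => degN T v = 1)).card
      + (Finset.univ.filter (fun v => degN T v = 2)).card := by
  unfold demand
  rw [Finset.card_filter, Finset.card_filter, Finset.mul_sum, ← Finset.sum_add_distrib]
  apply Finset.sum_congr rfl
  intro v _
  rw [card_nb]
  unfold wt
  split_ifs <;> omega

theorem TC.threeConnected {G : SimpleGraph V} (hn : 4 ≤ Fintype.card V)
    (h : TC Finset.univ G) : ThreeConnected G := by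
  intro S hS
  have hn' : 4 ≤ (Finset.univ : Finset V).card := hn
  refine (SimpleGraph.connected_iff _).mpr ⟨?_, ?_⟩
  · rintro ⟨a, ha⟩ ⟨b, hb⟩
    simp only [Set.mem_compl_iff, Finset.mem_coe] at ha hb
    -- if `|S| < 2`, then the set `S` is padded, in the empty case by a vertex other than `a`, `b`
    obtain ⟨s, t, hS', has, hat, hbs, hbt⟩ :
        ∃ s t, (∀ v, v ∈ S → v = s ∨ v = t) ∧ a ≠ s ∧ a ≠ t ∧ b ≠ s ∧ b ≠ t := by
      have hcases : S.card = 0 ∨ S.card = 1 ∨ S.card = 2 := by omega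
      rcases hcases with h0 | h1 | h2
      · obtain ⟨k, -, hka, hkb, -⟩ := exists_fourth hn' a b b
        rw [Finset.card_eq_zero] at h0
        exact ⟨k, k, by simp [h0], hka.symm, hka.symm, hkb.symm, hkb.symm⟩
      · obtain ⟨s, rfl⟩ := Finset.card_eq_one.mp h1
        simp only [Finset.mem_singleton] at ha hb
        exact ⟨s, s, by simp, ha, ha, hb, hb⟩
      · obtain ⟨s, t, -, rfl⟩ := Finset.card_eq_two.mp h2
        simp only [Finset.mem_insert, Finset.mem_singleton, not_or] at ha hb
        exact ⟨s, t, by simp, ha.1, ha.2, hb.1, hb.2⟩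
    have hmem : ∀ v, v ≠ s → v ≠ t → v ∈ ((S : Set V)ᶜ) := by
      intro v hs ht hv
      rcases hS' v hv with rfl | rfl
      · exact hs rfl
      · exact ht rfl
    have key := h s t (fun v => ∃ hv : v ∈ ((S : Set V)ᶜ),
      (G.induce ((S : Set V)ᶜ)).Reachable ⟨a, ha⟩ ⟨v, hv⟩) (by
        intro c _ d _ hcs hct hds hdt hcd
        have hadj : (G.induce ((S : Set V)ᶜ)).Adj ⟨c, hmem c hcs hct⟩ ⟨d, hmem d hds hdt⟩ := hcd
        constructor
        · rintro ⟨_, hr⟩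
          exact ⟨hmem d hds hdt, hr.trans hadj.reachable⟩
        · rintro ⟨_, hr⟩
          exact ⟨hmem c hcs hct, hr.trans hadj.symm.reachable⟩)
      a (Finset.mem_univ _) b (Finset.mem_univ _) has hat hbs hbt
    obtain ⟨_, hr⟩ := key.mp ⟨ha, SimpleGraph.Reachable.refl _⟩
    exact hr
  · have hlt : S.card < (Finset.univ : Finset V).card := by omega
    obtain ⟨v, -, hv⟩ := Finset.exists_mem_notMem_of_card_lt_card hlt
    exact ⟨⟨v, hv⟩⟩

end

/-- For every tree `T` on `n ≥ 4` vertices with maximum degree at least 3 there is an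
augmenting set of exactly `⌈(2·l₁ + l₂)/2⌉` non-edges whose addition makes the graph
3-vertex-connected. -/
theorem nonpath_augmentation_three_connected
    {V : Type*} [Fintype V] (T : SimpleGraph V) (hT : T.IsTree)
    (hn : 4 ≤ Fintype.card V)
    (hdeg3 : ∃ v : V, 3 ≤ degN T v) :
    ∃ F : Finset (Sym2 V),
      (∀ e ∈ F, ¬ e.IsDiag ∧ e ∉ T.edgeSet) ∧
      F.card = (2 * (Finset.univ.filter (fun v => degN T v = 1)).card
          + (Finset.univ.filter (fun v => degN T v = 2)).card + 1) / 2 ∧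
      ThreeConnected (T ⊔ SimpleGraph.fromEdgeSet (F : Set (Sym2 V))) := by
  obtain ⟨F, hF, hcard, hTC⟩ := hT.treeOn.hasAug (by rwa [Finset.card_univ])
  refine ⟨F, ?_, ?_, hTC.threeConnected hn⟩
  · intro e
    induction e using Sym2.ind with
    | _ a b =>
      intro hab
      rw [Sym2.mk_isDiag_iff, SimpleGraph.mem_edgeSet]
      exact (hF a b hab).2
  · rw [hcard, demand_univ]
end

section
/- Let T be a finite tree on n ≥ 4 vertices, and let l1 and l2 denote the number of vertices of T of degree 1 and of degree 2, respectively. Then there exists a set F of exactly ⌈(2·l1 + l2)/2⌉ unordered pairs of distinct vertices of T that are not edges of T such that the graph T + F is 3-vertex-connected. -/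
/-! ### Positions in a depth-first order -/

/-- The parent map `par` of a tree on `n` vertices that is rooted at a leaf and whose vertices are
identified with their positions `0, …, n - 1` in a depth-first preorder. `nested` is the preorder
condition (a position `i` visited between a vertex `par j` and its child `j` lies below `par j`,
so its parent does not precede `par j`), and `root` says that only position `1` hangs below the
root, i.e. that the root is a leaf. Values of `par` at `0` and outside the range are irrelevant. -/
structure IsDFSCode (n : ℕ) (par : ℕ → ℕ) : Prop where
  four_le : 4 ≤ n
  par_lt : ∀ i, 0 < i → i < n → par i < i
  nested : ∀ i j, 0 < i → j < n → par j < i → i ≤ j → par j ≤ par i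
  root : ∀ i, 1 < i → i < n → par i ≠ 0

/-- Position `i` is a leaf of the tree: the root `0`, or a vertex without children. -/
def IsLeafPos (n : ℕ) (par : ℕ → ℕ) (i : ℕ) : Prop :=
  i = 0 ∨ (i < n ∧ ∀ j, 0 < j → j < n → par j ≠ i)

/-- Position `i` has degree two: it is not the root and `i + 1` is its only child. -/
def IsTwoPos (n : ℕ) (par : ℕ → ℕ) (i : ℕ) : Prop :=
  0 < i ∧ i + 1 < n ∧ par (i + 1) = i ∧ ∀ j, 0 < j → j < n → par j = i → j = i + 1

/-- The hooks: the first and the last leaf in preorder, and all vertices of degree two. -/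
def IsHookPos (n : ℕ) (par : ℕ → ℕ) (i : ℕ) : Prop :=
  i = 0 ∨ i = n - 1 ∨ IsTwoPos n par i

/-- From every run `[a, b]` of positions of degree two some pair of the relation `R` leads to a
position outside `[a, b] ∪ {par a, b + 1}`, so that deleting the two tree neighbours `par a` and
`b + 1` of the run does not isolate it. The run whose neighbours are the two extreme leaves `0`
and `n - 1` is exempt: then the tree is a path and the run is everything that survives. -/
def LeavesRuns (n : ℕ) (par : ℕ → ℕ) (R : ℕ → ℕ → Prop) : Prop :=
  ∀ a b, 0 < a → a ≤ b → b + 1 < n → (∀ i, a ≤ i → i ≤ b → IsTwoPos n par i) →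
    ¬ (par a = 0 ∧ b + 1 = n - 1) →
    ∃ i j, a ≤ i ∧ i ≤ b ∧ (j < a ∨ b + 1 < j) ∧ j < n ∧ j ≠ par a ∧ (R i j ∨ R j i)

/-- Every inner position `p` lies strictly between the two hooks of some pair of `R`. -/
def Straddles (n : ℕ) (par : ℕ → ℕ) (R : ℕ → ℕ → Prop) : Prop :=
  ∀ p, 0 < p → p < n - 1 → ∃ j k, j < p ∧ p < k ∧ k < n ∧
    IsHookPos n par j ∧ IsHookPos n par k ∧ R j k

/-- A colouring `c` of the positions that survive the deletion of `D = {s, t}`, constant along every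
surviving edge: tree edges, spine edges (joining leaves that are consecutive in preorder) and hook
edges (the pairs of `R`). The deletion of `s` and `t` leaves a connected graph when every such
colouring is constant. -/
structure IsCutColoring (n : ℕ) (par : ℕ → ℕ) (R : ℕ → ℕ → Prop) (s t : ℕ)
    (D c : ℕ → Prop) : Prop where
  mem_iff : ∀ x, D x ↔ x = s ∨ x = t
  tree : ∀ j, 0 < j → j < n → ¬ D j → ¬ D (par j) → (c j ↔ c (par j))
  spine : ∀ x y, IsLeafPos n par x → IsLeafPos n par y → x < y →
    (∀ z, x < z → z < y → ¬ IsLeafPos n par z) → ¬ D x → ¬ D y → (c x ↔ c y)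
  hook : ∀ x y, R x y → ¬ D x → ¬ D y → (c x ↔ c y)

variable {n : ℕ} {par : ℕ → ℕ} {R : ℕ → ℕ → Prop} {s t : ℕ} {D c : ℕ → Prop}

namespace IsDFSCode

theorem par_one (h : IsDFSCode n par) : par 1 = 0 := by
  have := h.par_lt 1 (by omega) (by have := h.four_le; omega); omega

/-- In preorder, a vertex with a child `j` is followed immediately by its first child. -/
theorem succ_of_child (h : IsDFSCode n par) {i j : ℕ} (hj0 : 0 < j) (hj : j < n)
    (hp : par j = i) : par (i + 1) = i ∧ i + 1 ≤ j := by
  have h1 := h.par_lt j hj0 hj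
  have h2 := h.nested (i + 1) j (by omega) hj (by omega) (by omega)
  have h3 := h.par_lt (i + 1) (by omega) (by omega)
  omega

theorem succ_of_not_leaf (h : IsDFSCode n par) {i : ℕ} (hi : i < n)
    (hl : ¬ IsLeafPos n par i) : 0 < i ∧ i + 1 < n ∧ par (i + 1) = i := by
  unfold IsLeafPos at hl
  push Not at hl
  obtain ⟨j, hj0, hj, hp⟩ := hl.2 hi
  have := h.succ_of_child hj0 hj hp
  omega

theorem leaf_zero : IsLeafPos n par 0 := Or.inl rfl

theorem leaf_last (h : IsDFSCode n par) : IsLeafPos n par (n - 1) := by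
  have := h.four_le
  refine Or.inr ⟨by omega, fun j h0 hj hp => ?_⟩
  have := h.par_lt j h0 hj
  omega

theorem not_leaf_of_two {i : ℕ} (hi : IsTwoPos n par i) :
    ¬ IsLeafPos n par i := by
  rintro (h0 | ⟨_, h1⟩)
  · exact absurd hi.1 (by omega)
  · exact h1 (i + 1) (by omega) hi.2.1 hi.2.2.1

theorem eq_ends_of_hook_of_leaf {i : ℕ} (hi : IsHookPos n par i)
    (hl : IsLeafPos n par i) : i = 0 ∨ i = n - 1 := by
  rcases hi with hi | hi | hi
  · exact Or.inl hi
  · exact Or.inr hi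
  · exact absurd hl (not_leaf_of_two hi)

/-! ### Colourings after the deletion of two vertices -/

/-- Descending from `i` along first children, the positions `i, i + 1, …` are visited and share the
colour of `i`, until a deleted vertex or a leaf `e` is met. -/
theorem leaf_down (h : IsDFSCode n par) (hc : IsCutColoring n par R s t D c) {i : ℕ}
    (hi : i < n) :
    ∃ e, i ≤ e ∧ e < n ∧ (D e ∨ IsLeafPos n par e) ∧
      (∀ k, i ≤ k → k < e → ¬ D k ∧ ¬ IsLeafPos n par k) ∧
      (∀ k, i ≤ k → k ≤ e → ¬ D k → (c k ↔ c i)) := by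
  classical
  have hex : ∃ e, i ≤ e ∧ (D e ∨ IsLeafPos n par e) :=
    ⟨n - 1, by omega, Or.inr h.leaf_last⟩
  have hmin : ∀ k, i ≤ k → k < Nat.find hex → ¬ D k ∧ ¬ IsLeafPos n par k := by
    intro k hk hlt
    have := Nat.find_min hex hlt
    tauto
  have hle : Nat.find hex ≤ n - 1 := Nat.find_min' hex ⟨by omega, Or.inr h.leaf_last⟩
  refine ⟨Nat.find hex, (Nat.find_spec hex).1, by omega, (Nat.find_spec hex).2, hmin, ?_⟩
  intro k hk
  induction k, hk using Nat.le_induction with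
  | base => intros; rfl
  | succ k hk ih =>
    intro hke hD
    obtain ⟨h1, h2⟩ := hmin k hk (by omega)
    obtain ⟨_, _, h5⟩ := h.succ_of_not_leaf (i := k) (by omega) h2
    have := hc.tree (k + 1) (by omega) (by omega) hD (by rwa [h5])
    rw [this, h5]
    exact ih (by omega) h1

/-- The spine edges connect two leaves `x ≤ y` whenever no leaf of `[x, y]` is deleted. The number `d`
bounds `y - x` and only serves the induction. -/
theorem leaf_spine (hc : IsCutColoring n par R s t D c) :
    ∀ d x y, y - x ≤ d → x ≤ y → IsLeafPos n par x → IsLeafPos n par y →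
      (∀ z, x ≤ z → z ≤ y → IsLeafPos n par z → ¬ D z) → (c x ↔ c y) := by
  intro d
  induction d with
  | zero =>
    intro x y h1 h2 _ _ _
    obtain rfl : x = y := by omega
    rfl
  | succ d ih =>
    intro x y hd hxy hx hy hD
    by_cases hz : ∃ z, x < z ∧ z < y ∧ IsLeafPos n par z
    · obtain ⟨z, h1, h2, h3⟩ := hz
      rw [ih x z (by omega) h1.le hx h3 (fun w hw hw' => hD w hw (by omega)),
        ih z y (by omega) h2.le h3 hy (fun w hw hw' => hD w (by omega) hw')]
    · push Not at hz
      rcases hxy.eq_or_lt with rfl | hlt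
      · rfl
      · exact hc.spine x y hx hy hlt hz (hD x le_rfl hxy hx) (hD y hxy le_rfl hy)

/-- If all surviving leaves have colour `X`, so has every surviving vertex. Let `i` be the least
surviving position of the other colour. Its parent must be deleted, and the downward chain from `i`
cannot end in a surviving leaf, so it runs into the other deleted vertex `e`. Vertices after `e`
descend to surviving leaves, hence have colour `X` and do not hang below `[i, e - 1]`. So
`[i, e - 1]` is a run of vertices of degree two, and a hook edge leaving it gives a contradiction. -/
theorem const_of_leaves (h : IsDFSCode n par) (hR : LeavesRuns n par R)
    (hc : IsCutColoring n par R s t D c)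
    (hst : ¬ (D 0 ∧ D (n - 1))) (X : Prop)
    (hX : ∀ x, x < n → IsLeafPos n par x → ¬ D x → (c x ↔ X)) :
    ∀ i, i < n → ¬ D i → (c i ↔ X) := by
  by_contra hcon
  classical
  have hex : ∃ i, i < n ∧ ¬ D i ∧ ¬ (c i ↔ X) := by
    simpa only [not_forall, exists_prop] using hcon
  obtain ⟨i, ⟨hin, hiD, hiX⟩, hmin'⟩ :
      ∃ i, (i < n ∧ ¬ D i ∧ ¬ (c i ↔ X)) ∧ ∀ k < i, ¬ (k < n ∧ ¬ D k ∧ ¬ (c k ↔ X)) :=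
    ⟨Nat.find hex, Nat.find_spec hex, fun k hk => Nat.find_min hex hk⟩
  have hmin : ∀ k < i, ¬ D k → (c k ↔ X) := fun k hk hkD => by
    by_contra hne; exact hmin' k hk ⟨by omega, hkD, hne⟩
  have hi0 : 0 < i := by
    rcases Nat.eq_zero_or_pos i with rfl | h0
    · exact absurd (hX 0 hin leaf_zero hiD) hiX
    · exact h0
  have hpi := h.par_lt i hi0 hin
  have hparD : D (par i) := by
    by_contra hp
    exact hiX ((hc.tree i hi0 hin hiD hp).trans (hmin _ hpi hp))
  obtain ⟨e, hie, hen, htarget, hrun, hcol⟩ := h.leaf_down hc hin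
  have heD : D e := by
    by_contra he
    have hl := htarget.resolve_left he
    exact hiX ((hcol e hie le_rfl he).symm.trans (hX e hen hl he))
  have hine : i ≠ e := by rintro rfl; exact hiD heD
  -- the deleted set is exactly `{par i, e}`
  have hDiff : ∀ x, D x ↔ x = par i ∨ x = e := by
    intro x
    have h1 := (hc.mem_iff _).1 hparD
    have h2 := (hc.mem_iff _).1 heD
    rw [hc.mem_iff]
    omega
  have habove : ∀ j, e < j → j < n → (c j ↔ X) := by
    intro j hj hjn
    obtain ⟨f, hjf, hfn, htarget', -, hcol'⟩ := h.leaf_down hc hjn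
    have hfD : ¬ D f := by rw [hDiff]; omega
    exact (hcol' f hjf le_rfl hfD).symm.trans (hX f hfn (htarget'.resolve_left hfD) hfD)
  have hne : ∀ k, i ≤ k → k < e → ¬ (c k ↔ X) := fun k h1 h2 h3 =>
    hiX ((hcol k h1 h2.le (hrun k h1 h2).1).symm.trans h3)
  have htwo : ∀ k, i ≤ k → k ≤ e - 1 → IsTwoPos n par k := by
    intro k h1 h2
    obtain ⟨h3, h4, h5⟩ := h.succ_of_not_leaf (i := k) (by omega) (hrun k h1 (by omega)).2
    refine ⟨h3, h4, h5, fun j hj0 hj hp => ?_⟩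
    by_contra hjk
    have h6 := (h.succ_of_child hj0 hj hp).2
    have hje : e < j := by
      by_contra hle
      have h7 := h.succ_of_not_leaf (i := j - 1) (by omega) (hrun (j - 1) (by omega) (by omega)).2
      have h8 : j - 1 + 1 = j := by omega
      rw [h8] at h7
      omega
    refine hne k h1 (by omega) ?_
    have h9 := hc.tree j hj0 hj (by rw [hDiff]; omega) (by rw [hp]; exact (hrun k h1 (by omega)).1)
    rw [hp] at h9
    exact h9.symm.trans (habove j hje hj)
  obtain ⟨k, j, hk1, hk2, hj, hjn, hjp, hRkj⟩ := hR i (e - 1) hi0 (by omega) (by omega) htwo (by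
    rintro ⟨h1, h2⟩
    refine hst ⟨h1 ▸ hparD, ?_⟩
    have : e = n - 1 := by omega
    exact this ▸ heD)
  have hjD : ¬ D j := by rw [hDiff]; omega
  have hkD := (hrun k hk1 (by omega)).1
  have hkj : c k ↔ c j := by
    rcases hRkj with hr | hr
    · exact hc.hook _ _ hr hkD hjD
    · exact (hc.hook _ _ hr hjD hkD).symm
  refine hne k hk1 (by omega) (hkj.trans ?_)
  rcases hj with hj | hj
  · exact hmin j hj hjD
  · exact habove j (by omega) hjn

/-- Deleting two leaves does not disconnect the tree. -/
theorem const_of_two_leaves (h : IsDFSCode n par) (hc : IsCutColoring n par R s t D c)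
    (hD : ∀ x, D x → IsLeafPos n par x) : ∃ X : Prop, ∀ i, i < n → ¬ D i → (c i ↔ X) := by
  have h4 := h.four_le
  have hpar : ∀ i, 1 < i → i < n → ¬ D (par i) := by
    intro i h1 h2 h3
    rcases hD _ h3 with h5 | h5
    · exact h.root i h1 h2 h5
    · exact h5.2 i (by omega) h2 rfl
  have hp2 : par 2 = 1 := by
    have h1 := h.par_lt 2 (by omega) (by omega)
    have h2 := h.root 2 (by omega) (by omega)
    omega
  have h1D : ¬ D 1 := by
    have := hpar 2 (by omega) (by omega)
    rwa [hp2] at this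
  refine ⟨c 1, fun i => ?_⟩
  induction i using Nat.strong_induction_on with
  | _ i ih =>
    intro hi hiD
    rcases Nat.lt_or_ge 1 i with h1 | h1
    · have hp := hpar i h1 hi
      have hlt := h.par_lt i (by omega) hi
      exact (hc.tree i (by omega) hi hiD hp).trans (ih _ hlt (by omega) hp)
    · rcases Nat.eq_zero_or_pos i with rfl | h0
      · have := hc.tree 1 (by omega) (by omega) h1D (by rwa [h.par_one])
        rw [h.par_one] at this
        exact this.symm
      · obtain rfl : i = 1 := by omega
        rfl

/-- If an inner leaf `s` and a non-leaf `t` are deleted, the spine falls into two pieces, but the two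
extreme leaves still have the same colour. Otherwise let `i` be the least surviving position not of
the colour of `0`. Then `par i = t`, all survivors before `i` have the colour of `0`, and all
survivors from `i` on have the colour of `n - 1`. The hook edge straddling `i - 1` joins the two
sides. Its ends survive: neither is the inner leaf `s`, and if `t` is a hook then `t = i - 1`. -/
theorem ends_eq_of_inner_leaf (h : IsDFSCode n par) (hQ : Straddles n par R)
    (hc : IsCutColoring n par R s t D c) (hs : IsLeafPos n par s) (hs0 : 0 < s)
    (hsn : s < n - 1) (ht : ¬ IsLeafPos n par t) (htn : t < n) : c 0 ↔ c (n - 1) := by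
  by_contra hXY
  have ht0 := (h.succ_of_not_leaf htn ht)
  have hsD : D s := (hc.mem_iff s).2 (Or.inl rfl)
  have hD0 : ¬ D 0 := by rw [hc.mem_iff]; omega
  have hDn : ¬ D (n - 1) := by rw [hc.mem_iff]; omega
  have hnoteq : ∀ x, IsLeafPos n par x → D x → x = s := by
    intro x hx hxD
    rcases (hc.mem_iff x).1 hxD with h1 | rfl
    · exact h1
    · exact absurd hx ht
  have hlow : ∀ x, IsLeafPos n par x → x < s → (c x ↔ c 0) := fun x hx hlt =>
    (leaf_spine hc x 0 x (by omega) (by omega) leaf_zero hx (fun z _ hz hl hzD => by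
      have := hnoteq z hl hzD; omega)).symm
  have hhigh : ∀ x, IsLeafPos n par x → s < x → x < n → (c x ↔ c (n - 1)) := fun x hx hlt hxn =>
    leaf_spine hc n x (n - 1) (by omega) (by omega) hx h.leaf_last (fun z _ hz hl hzD => by
      have := hnoteq z hl hzD; omega)
  classical
  have hex : ∃ i, i < n ∧ ¬ D i ∧ ¬ (c i ↔ c 0) :=
    ⟨n - 1, by omega, hDn, fun h1 => hXY h1.symm⟩
  obtain ⟨i, ⟨hin, hiD, hiX⟩, hmin'⟩ :
      ∃ i, (i < n ∧ ¬ D i ∧ ¬ (c i ↔ c 0)) ∧ ∀ k < i, ¬ (k < n ∧ ¬ D k ∧ ¬ (c k ↔ c 0)) :=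
    ⟨Nat.find hex, Nat.find_spec hex, fun k hk => Nat.find_min hex hk⟩
  have hmin : ∀ k < i, ¬ D k → (c k ↔ c 0) := fun k hk hkD => by
    by_contra hne; exact hmin' k hk ⟨by omega, hkD, hne⟩
  have hi0 : 0 < i := by
    rcases Nat.eq_zero_or_pos i with rfl | h0
    · exact absurd Iff.rfl hiX
    · exact h0
  have hpi := h.par_lt i hi0 hin
  have hparD : D (par i) := by
    by_contra hp
    exact hiX ((hc.tree i hi0 hin hiD hp).trans (hmin _ hpi hp))
  have hpt : par i = t := by
    rcases (hc.mem_iff _).1 hparD with h1 | h1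
    · rcases hs with h2 | h2
      · omega
      · exact absurd h1 (h2.2 i hi0 hin)
    · exact h1
  have hup : ∀ k, i ≤ k → k < n → ¬ D k → (c k ↔ c (n - 1)) := by
    intro k hik hkn hkD
    rcases Nat.lt_or_ge s k with hsk | hsk
    · obtain ⟨f, hkf, hfn, htarget, -, hcol⟩ := h.leaf_down hc hkn
      have hfD : ¬ D f := by rw [hc.mem_iff]; omega
      exact (hcol f hkf le_rfl hfD).symm.trans (hhigh f (htarget.resolve_left hfD) (by omega) hfn)
    · have hks : k ≠ s := by rintro rfl; exact hkD hsD
      obtain ⟨f, hkf, hfn, htarget, hrun, hcol⟩ := h.leaf_down hc hin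
      -- the downward chain from `i` must run into `s`, so `k` lies on it
      have hfs : s ≤ f := by
        by_contra hlt
        have hfD : ¬ D f := by rw [hc.mem_iff]; omega
        exact hiX ((hcol f hkf le_rfl hfD).symm.trans
          (hlow f (htarget.resolve_left hfD) (by omega)))
      have := hcol k hik (by omega) hkD
      tauto
  obtain ⟨j, k, hj, hk, hkn, hjh, hkh, hjk⟩ := hQ (i - 1) (by omega) (by omega)
  have hDhook : ∀ x, IsHookPos n par x → D x → x = t ∧ IsTwoPos n par t := by
    intro x hx hxD
    rcases (hc.mem_iff x).1 hxD with rfl | rfl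
    · have := eq_ends_of_hook_of_leaf hx hs
      omega
    · refine ⟨rfl, ?_⟩
      rcases hx with hx | hx | hx
      · omega
      · omega
      · exact hx
  have hti : IsTwoPos n par t → i = t + 1 := fun h2 => h2.2.2.2 i hi0 hin hpt
  have hjD : ¬ D j := fun hd => by
    obtain ⟨h1, h2⟩ := hDhook j hjh hd
    have := hti h2
    omega
  have hkD : ¬ D k := fun hd => by
    obtain ⟨h1, h2⟩ := hDhook k hkh hd
    have := hti h2
    omega
  have h1 := hc.hook j k hjk hjD hkD
  have h2 := hmin j (by omega) hjD
  have h3 := hup k (by omega) hkn hkD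
  tauto

/-- The case of a deleted leaf `s` and a deleted vertex `t` that is not a leaf. -/
theorem const_of_one_leaf (h : IsDFSCode n par) (hR : LeavesRuns n par R)
    (hQ : Straddles n par R) (hc : IsCutColoring n par R s t D c) (hs : IsLeafPos n par s)
    (ht : ¬ IsLeafPos n par t) (hsn : s < n) (htn : t < n) :
    ∃ X : Prop, ∀ i, i < n → ¬ D i → (c i ↔ X) := by
  have h4 := h.four_le
  have ht0 := (h.succ_of_not_leaf htn ht)
  have hnoteq : ∀ x, IsLeafPos n par x → D x → x = s := by
    intro x hx hxD
    rcases (hc.mem_iff x).1 hxD with h1 | rfl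
    · exact h1
    · exact absurd hx ht
  have hst : ¬ (D 0 ∧ D (n - 1)) := by rw [hc.mem_iff, hc.mem_iff]; omega
  rcases Nat.eq_zero_or_pos s with h0 | h0
  · refine ⟨c (n - 1), h.const_of_leaves hR hc hst _ fun x hx hl hxD => ?_⟩
    refine leaf_spine hc n x (n - 1) (by omega) (by omega) hl h.leaf_last
      fun z hz _ hzl hzD => ?_
    have h1 := hnoteq z hzl hzD
    have h2 : x = s := by omega
    exact hxD ((hc.mem_iff x).2 (Or.inl h2))
  · refine ⟨c 0, h.const_of_leaves hR hc hst _ fun x hx hl hxD => ?_⟩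
    have hxs : x ≠ s := fun h2 => hxD ((hc.mem_iff x).2 (Or.inl h2))
    rcases Nat.lt_or_ge x s with hlt | hge
    · refine (leaf_spine hc n 0 x (by omega) (by omega) leaf_zero hl fun z _ hz hzl hzD => ?_).symm
      have h1 := hnoteq z hzl hzD
      omega
    · rw [h.ends_eq_of_inner_leaf hQ hc hs h0 (by omega) ht htn]
      refine leaf_spine hc n x (n - 1) (by omega) (by omega) hl h.leaf_last
        fun z hz _ hzl hzD => ?_
      have h1 := hnoteq z hzl hzD
      omega

/-- The combinatorial core: the tree with its spine and hook edges stays connected when the two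
positions `s` and `t` are deleted. -/
theorem cutColoring_const (h : IsDFSCode n par) (hR : LeavesRuns n par R)
    (hQ : Straddles n par R) (hc : IsCutColoring n par R s t D c)
    (hsn : s < n) (htn : t < n) :
    ∃ X : Prop, ∀ i, i < n → ¬ D i → (c i ↔ X) := by
  by_cases hs : IsLeafPos n par s <;> by_cases ht : IsLeafPos n par t
  · refine h.const_of_two_leaves hc fun x hx => ?_
    rcases (hc.mem_iff x).1 hx with rfl | rfl <;> assumption
  · exact h.const_of_one_leaf hR hQ hc hs ht hsn htn
  · have hc' : IsCutColoring n par R t s D c :=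
      ⟨fun x => by rw [hc.mem_iff, or_comm], hc.tree, hc.spine, hc.hook⟩
    exact h.const_of_one_leaf hR hQ hc' ht hs htn hsn
  · have hleaf : ∀ x, IsLeafPos n par x → ¬ D x := by
      intro x hx hxD
      rcases (hc.mem_iff x).1 hxD with rfl | rfl <;> contradiction
    refine ⟨c 0, h.const_of_leaves hR hc (fun h0 => hleaf 0 leaf_zero h0.1) _
      fun x hx hl hxD => ?_⟩
    exact (leaf_spine hc n 0 x (by omega) (by omega) leaf_zero hl
      fun z _ _ hzl => hleaf z hzl).symm

end IsDFSCode


/-! ### Choosing the hook edges -/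

/-- An increasing enumeration of a finite set of natural numbers, as a function on `ℕ`. -/
theorem exists_enum (A : Finset ℕ) : ∃ q : ℕ → ℕ,
    (∀ i j, i < j → j < A.card → q i < q j) ∧ (∀ i, i < A.card → q i ∈ A) ∧
    (∀ x ∈ A, ∃ i, i < A.card ∧ q i = x) := by
  refine ⟨fun i => if hi : i < A.card then A.orderEmbOfFin rfl ⟨i, hi⟩ else 0, ?_, ?_, ?_⟩
  · intro i j hij hj
    simp [hj, hij.trans hj, hij]
  · intro i hi
    simp [hi]
  · intro x hx
    have : x ∈ Set.range (A.orderEmbOfFin rfl) := by simpa using hx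
    obtain ⟨i, rfl⟩ := this
    exact ⟨i, i.2, by simp⟩

theorem exists_consecutive_pairs (A : Finset ℕ) (hA : A.Nonempty) : ∃ P : Finset (ℕ × ℕ),
    (∀ x y, (x, y) ∈ P ↔ x ∈ A ∧ y ∈ A ∧ x < y ∧ ∀ z, x < z → z < y → z ∉ A) ∧
    P.card + 1 = A.card := by
  obtain ⟨q, hmono, hmem, hsurj⟩ := exists_enum A
  have hpos := hA.card_pos
  have hle : ∀ i j, i ≤ j → j < A.card → q i ≤ q j := fun i j hij hj => by
    rcases hij.eq_or_lt with rfl | hlt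
    · exact le_rfl
    · exact (hmono i j hlt hj).le
  refine ⟨(Finset.range (A.card - 1)).image fun i => (q i, q (i + 1)), ?_, ?_⟩
  · intro x y
    simp only [Finset.mem_image, Finset.mem_range, Prod.mk.injEq]
    constructor
    · rintro ⟨i, hi, rfl, rfl⟩
      refine ⟨hmem _ (by omega), hmem _ (by omega), hmono _ _ (by omega) (by omega), ?_⟩
      intro z h1 h2 hz
      obtain ⟨k, hk, rfl⟩ := hsurj z hz
      rcases Nat.lt_or_ge i k with h3 | h3
      · have := hle (i + 1) k h3 hk
        omega
      · have := hle k i h3 (by omega)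
        omega
    · rintro ⟨hx, hy, hxy, hz⟩
      obtain ⟨i, hi, rfl⟩ := hsurj x hx
      obtain ⟨k, hk, rfl⟩ := hsurj y hy
      have hik : i < k := by
        by_contra hlt
        have := hle k i (by omega) hi
        omega
      have hk1 : k = i + 1 := by
        by_contra hne
        exact hz (q (i + 1)) (hmono _ _ (by omega) (by omega)) (hmono _ _ (by omega) hk)
          (hmem _ (by omega))
      subst hk1
      exact ⟨i, by omega, rfl, rfl⟩
  · rw [Finset.card_image_of_injOn, Finset.card_range]
    · omega
    · intro i hi j hj hij
      simp only [Finset.coe_range, Set.mem_Iio, Prod.mk.injEq] at hi hj hij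
      by_contra hne
      rcases Nat.lt_or_gt_of_ne hne with h1 | h1
      · have := hmono i j h1 (by omega); omega
      · have := hmono j i h1 (by omega); omega

namespace IsDFSCode

/-- Without leaves other than `0` and `n - 1` the tree is a path. -/
theorem two_of_no_inner_leaf (h : IsDFSCode n par)
    (hl : ∀ z, 0 < z → z < n - 1 → ¬ IsLeafPos n par z) :
    ∀ i, 0 < i → i < n - 1 → IsTwoPos n par i := by
  intro i h0 h1
  obtain ⟨-, h2, h3⟩ := h.succ_of_not_leaf (by omega) (hl i h0 h1)
  refine ⟨h0, h2, h3, fun j hj0 hj hp => ?_⟩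
  by_contra hne
  have h4 := (h.succ_of_child hj0 hj hp).2
  have h5 := h.succ_of_not_leaf (i := j - 1) (by omega) (hl (j - 1) (by omega) (by omega))
  rw [show j - 1 + 1 = j by omega] at h5
  omega

/-- A hook has at most one child, which is then the next position. -/
theorem succ_of_hook_parent (h : IsDFSCode n par) {j k : ℕ} (hj : IsHookPos n par j)
    (hk0 : 0 < k) (hk : k < n) (hp : par k = j) : k = j + 1 := by
  have hlt := h.par_lt k hk0 hk
  rcases hj with rfl | rfl | hj
  · by_contra hne
    exact h.root k (by omega) hk hp
  · omega
  · exact hj.2.2.2 k hk0 hk hp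

open Classical in
theorem card_hook (h : IsDFSCode n par) :
    ((Finset.range n).filter (IsHookPos n par)).card =
      ((Finset.range n).filter (IsTwoPos n par)).card + 2 := by
  have h4 := h.four_le
  have : (Finset.range n).filter (IsHookPos n par) =
      insert 0 (insert (n - 1) ((Finset.range n).filter (IsTwoPos n par))) := by
    ext x
    simp only [Finset.mem_filter, Finset.mem_range, Finset.mem_insert, IsHookPos]
    constructor
    · tauto
    · rintro (h1 | h1 | h1)
      · exact ⟨by omega, Or.inl h1⟩
      · exact ⟨by omega, Or.inr (Or.inl h1)⟩
      · exact ⟨h1.1, Or.inr (Or.inr h1.2)⟩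
  rw [this, Finset.card_insert_of_notMem, Finset.card_insert_of_notMem]
  · simp only [Finset.mem_filter, IsTwoPos]; omega
  · simp only [Finset.mem_insert, Finset.mem_filter, IsTwoPos]; omega

end IsDFSCode

/-- `H` is an admissible set of hook edges: its pairs, written in increasing order, are neither tree
edges nor spine edges, and they have the two properties required of hook edges. -/
def IsGoodHookSet (n : ℕ) (par : ℕ → ℕ) (H : Finset (ℕ × ℕ)) : Prop :=
  (∀ j k, (j, k) ∈ H → j < k ∧ k < n ∧ par k ≠ j ∧
    ¬ (IsLeafPos n par j ∧ IsLeafPos n par k ∧ ∀ z, j < z → z < k → ¬ IsLeafPos n par z)) ∧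
  LeavesRuns n par (fun x y => (x, y) ∈ H) ∧ Straddles n par (fun x y => (x, y) ∈ H)

namespace IsDFSCode

open Classical in
/-- With a single vertex `x` of degree two, the hook edges are `{0, n - 1}` and an edge from `x` to some
vertex `y` that is not a tree neighbour of `x`. -/
theorem exists_hooks_of_one (h : IsDFSCode n par)
    (h1 : ((Finset.range n).filter (IsTwoPos n par)).card = 1) :
    ∃ H, IsGoodHookSet n par H ∧ H.card = 2 := by
  have h4 := h.four_le
  obtain ⟨x, hx⟩ := Finset.card_eq_one.1 h1
  have hiff : ∀ i, IsTwoPos n par i ↔ i = x := by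
    intro i
    have := Finset.ext_iff.1 hx i
    simp only [Finset.mem_filter, Finset.mem_range, Finset.mem_singleton] at this
    rw [← this]
    exact ⟨fun hi => ⟨by have := hi.2.1; omega, hi⟩, fun hi => hi.2⟩
  have hxt := (hiff x).2 rfl
  obtain ⟨hx0, hxn, hxp, hxu⟩ := hxt
  have hlx := h.par_lt x hx0 (by omega)
  obtain ⟨y, hyn, hyx, hyx1, hyp⟩ : ∃ y, y < n ∧ y ≠ x ∧ y ≠ x + 1 ∧ y ≠ par x := by
    by_contra hcon
    push Not at hcon
    have a0 := hcon 0 (by omega)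
    have a1 := hcon 1 (by omega)
    have a2 := hcon 2 (by omega)
    have a3 := hcon 3 (by omega)
    omega
  refine ⟨{(0, n - 1), (min x y, max x y)}, ⟨?_, ?_, ?_⟩, ?_⟩
  · intro j k hjk
    simp only [Finset.mem_insert, Finset.mem_singleton, Prod.mk.injEq] at hjk
    rcases hjk with ⟨rfl, rfl⟩ | ⟨hj, hk⟩
    · refine ⟨by omega, by omega, h.root _ (by omega) (by omega), ?_⟩
      rintro ⟨-, -, hz⟩
      have b1 := (hiff 1).1 (h.two_of_no_inner_leaf hz 1 (by omega) (by omega))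
      have b2 := (hiff 2).1 (h.two_of_no_inner_leaf hz 2 (by omega) (by omega))
      omega
    · have hnl : ¬ IsLeafPos n par x := not_leaf_of_two ((hiff x).2 rfl)
      rcases Nat.lt_or_gt_of_ne hyx with hlt | hlt
      · rw [min_eq_right hlt.le] at hj
        rw [max_eq_left hlt.le] at hk
        subst hj hk
        exact ⟨hlt, by omega, by omega, fun hcon => hnl hcon.2.1⟩
      · rw [min_eq_left hlt.le] at hj
        rw [max_eq_right hlt.le] at hk
        subst hj hk
        exact ⟨hlt, by omega, fun hp => hyx1 (hxu _ (by omega) (by omega) hp),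
          fun hcon => hnl hcon.1⟩
  · intro a b ha hab hb htwo _
    have ea := (hiff a).1 (htwo a le_rfl hab)
    have eb := (hiff b).1 (htwo b hab le_rfl)
    subst ea
    subst eb
    refine ⟨b, y, le_rfl, le_rfl, by omega, hyn, hyp, ?_⟩
    rcases Nat.lt_or_gt_of_ne hyx with hlt | hlt
    · right; simp [min_eq_right hlt.le, max_eq_left hlt.le]
    · left; simp [min_eq_left hlt.le, max_eq_right hlt.le]
  · intro p hp hpn
    exact ⟨0, n - 1, hp, hpn, by omega, Or.inl rfl, Or.inr (Or.inl rfl), by simp⟩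
  · rw [Finset.card_insert_of_notMem, Finset.card_singleton]
    simp only [Finset.mem_singleton, Prod.mk.injEq]
    omega

open Classical in
/-- If the number `l2` of vertices of degree two is not one, enumerate the hooks increasingly as
`q 0 = 0, …, q (L - 1) = n - 1` with `L = l2 + 2`, and join `q i` to `q (i + m)` for `m = ⌊L / 2⌋`.
These are `⌈L / 2⌉` edges. For `L = 3` one has `m = 1`, and `{q 0, q 1}` could be a tree edge. -/
theorem exists_hooks_of_ne_one (h : IsDFSCode n par)
    (h1 : ((Finset.range n).filter (IsTwoPos n par)).card ≠ 1) :
    ∃ H, IsGoodHookSet n par H ∧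
      H.card = (((Finset.range n).filter (IsTwoPos n par)).card + 3) / 2 := by
  have h4 := h.four_le
  have hcard := h.card_hook
  obtain ⟨q, hmono, hmem, hsurj⟩ := exists_enum ((Finset.range n).filter (IsHookPos n par))
  set l2 := ((Finset.range n).filter (IsTwoPos n par)).card with hl2
  rw [hcard] at hmono hmem hsurj
  obtain ⟨L, hL⟩ : ∃ L, L = l2 + 2 := ⟨_, rfl⟩
  rw [← hL] at hmono hmem hsurj
  obtain ⟨m, hm⟩ : ∃ m, m = L / 2 := ⟨_, rfl⟩
  have hhook : ∀ i, i < L → q i < n ∧ IsHookPos n par (q i) := fun i hi => by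
    simpa using hmem i hi
  have hidx : ∀ x, x < n → IsHookPos n par x → ∃ i, i < L ∧ q i = x := fun x hx hh =>
    hsurj x (by simpa using ⟨hx, hh⟩)
  have hle : ∀ i j, i ≤ j → j < L → q i ≤ q j := fun i j hij hj => by
    rcases hij.eq_or_lt with rfl | hlt
    · exact le_rfl
    · exact (hmono i j hlt hj).le
  have hlt_of : ∀ i j, i < L → q i < q j → i < j := fun i j hi hq => by
    by_contra hcon
    have := hle j i (by omega) hi
    omega
  have hq0 : q 0 = 0 := by
    obtain ⟨i, hi, hqi⟩ := hidx 0 (by omega) (Or.inl rfl)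
    have := hle 0 i (by omega) hi
    omega
  have hqL : q (L - 1) = n - 1 := by
    obtain ⟨i, hi, hqi⟩ := hidx (n - 1) (by omega) (Or.inr (Or.inl rfl))
    have := hle i (L - 1) (by omega) (by omega)
    have := (hhook (L - 1) (by omega)).1
    omega
  set H := (Finset.range (L - m)).image fun i => (q i, q (i + m)) with hH
  have hmemH : ∀ i, i + m < L → (q i, q (i + m)) ∈ H := fun i hi =>
    Finset.mem_image.2 ⟨i, by simp; omega, rfl⟩
  refine ⟨H, ⟨?_, ?_, ?_⟩, ?_⟩
  · intro j k hjk
    obtain ⟨i, hi, hjk⟩ := Finset.mem_image.1 hjk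
    simp only [Finset.mem_range, Prod.mk.injEq] at hi hjk
    obtain ⟨rfl, rfl⟩ := hjk
    have hlt := hmono i (i + m) (by omega) (by omega)
    have hj := hhook i (by omega)
    have hk := hhook (i + m) (by omega)
    refine ⟨hlt, hk.1, fun hp => ?_, ?_⟩
    · have hs := h.succ_of_hook_parent hj.2 (by omega) hk.1 hp
      rcases Nat.lt_or_ge 1 m with hm1 | hm1
      · have := hmono i (i + 1) (by omega) (by omega)
        have := hmono (i + 1) (i + m) (by omega) (by omega)
        omega
      · have e1 : i = 0 := by omega
        have e2 : i + m = L - 1 := by omega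
        rw [e2, hqL, e1, hq0] at hs
        omega
    · rintro ⟨lj, lk, hz⟩
      have c1 := eq_ends_of_hook_of_leaf hj.2 lj
      have c2 := eq_ends_of_hook_of_leaf hk.2 lk
      have e1 : q i = 0 := by omega
      have e2 : q (i + m) = n - 1 := by omega
      have i0 : ¬ 0 < i := fun hi0 => by have := hmono 0 i hi0 (by omega); omega
      have iL : ¬ i + m < L - 1 := fun hi0 => by
        have := hmono (i + m) (L - 1) hi0 (by omega); omega
      rw [e1, e2] at hz
      obtain ⟨u, hu, hqu⟩ := hidx 1 (by omega)
        (Or.inr (Or.inr (h.two_of_no_inner_leaf hz 1 (by omega) (by omega))))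
      have := hlt_of 0 u (by omega) (by omega)
      have := hlt_of u (L - 1) (by omega) (by omega)
      omega
  · intro a b ha hab hb htwo hnot
    obtain ⟨u, hu, hqu⟩ := hidx a (by omega) (Or.inr (Or.inr (htwo a le_rfl hab)))
    obtain ⟨v, hv, hqv⟩ := hidx b (by omega) (Or.inr (Or.inr (htwo b hab le_rfl)))
    have huv : u ≤ v := by
      by_contra hcon
      have := hmono v u (by omega) hu
      omega
    have hu0 : 0 < u := hlt_of 0 u (by omega) (by omega)
    have hvL : v < L - 1 := hlt_of v (L - 1) (by omega) (by omega)
    have hpa := h.par_lt a ha (by omega)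
    have hin : ∀ i, u ≤ i → i ≤ v → a ≤ q i ∧ q i ≤ b := fun i h1 h2 => by
      have := hle u i h1 (by omega)
      have := hle i v h2 hv
      omega
    -- indices at distance at least two from the run give admissible partners
    have hfarl : ∀ i, i + 1 < u → q i < a ∧ q i ≠ par a := fun i hi => by
      have g1 := hmono i (i + 1) (by omega) (by omega)
      have g2 := hmono (i + 1) u hi hu
      refine ⟨by omega, fun hp => ?_⟩
      have := h.succ_of_hook_parent (hhook i (by omega)).2 ha (by omega) hp.symm
      omega
    have hfarr : ∀ i, v + 1 < i → i < L → b + 1 < q i ∧ q i ≠ par a := fun i hi hiL => by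
      have g1 := hmono v (v + 1) (by omega) (by omega)
      have g2 := hmono (v + 1) i hi hiL
      omega
    -- If `par a` is the root then `u = 1`, and `L - 1 - m` may serve as the index of the leaving end.
    -- Otherwise `q 0 = 0` is itself an admissible partner for the index `m`.
    by_cases hpar : par a = 0
    · have ha1 : a = 1 := by
        by_contra hne
        exact h.root a (by omega) (by omega) hpar
      have hu1 : u = 1 := by
        by_contra hne
        have := hmono 0 1 (by omega) (by omega)
        have := hmono 1 u (by omega) hu
        omega
      rcases Nat.lt_or_ge v (L - 1 - m) with hcase | hcase
      · have hf := hfarr (1 + m) (by omega) (by omega)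
        have hi := hin 1 (by omega) (by omega)
        exact ⟨q 1, q (1 + m), hi.1, hi.2, Or.inr hf.1, (hhook _ (by omega)).1, hf.2,
          Or.inl (hmemH 1 (by omega))⟩
      · have hi := hin (L - 1 - m) (by omega) hcase
        refine ⟨q (L - 1 - m), n - 1, hi.1, hi.2, Or.inr (by omega), by omega, by omega, Or.inl ?_⟩
        have := hmemH (L - 1 - m) (by omega)
        rwa [show L - 1 - m + m = L - 1 by omega, hqL] at this
    · rcases Nat.lt_or_ge v m with hcase | hcase
      · have hf := hfarr (u + m) (by omega) (by omega)
        have hi := hin u le_rfl huv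
        exact ⟨q u, q (u + m), hi.1, hi.2, Or.inr hf.1, (hhook _ (by omega)).1, hf.2,
          Or.inl (hmemH u (by omega))⟩
      · rcases Nat.lt_or_ge m u with hcase2 | hcase2
        · have hf := hfarl (u - m) (by omega)
          have hi := hin u le_rfl huv
          refine ⟨q u, q (u - m), hi.1, hi.2, Or.inl hf.1, (hhook _ (by omega)).1, hf.2,
            Or.inr ?_⟩
          have := hmemH (u - m) (by omega)
          rwa [show u - m + m = u by omega] at this
        · have hi := hin m hcase2 hcase
          refine ⟨q m, 0, hi.1, hi.2, Or.inl (by omega), by omega, by omega, Or.inr ?_⟩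
          have := hmemH 0 (by omega)
          rwa [hq0, Nat.zero_add] at this
  · intro p hp hpn
    -- `u` is the last index with `q u < p`
    obtain ⟨u, huL, hup, hup1⟩ : ∃ u, u + 1 < L ∧ q u < p ∧ p ≤ q (u + 1) := by
      have hex : ∃ w, w < L ∧ p ≤ q w := ⟨L - 1, by omega, by omega⟩
      have hsp := Nat.find_spec hex
      have hw0 : Nat.find hex ≠ 0 := fun h0 => by
        rw [h0, hq0] at hsp
        omega
      have hmin := Nat.find_min hex (m := Nat.find hex - 1) (by omega)
      refine ⟨Nat.find hex - 1, by omega, by omega, ?_⟩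
      rw [show Nat.find hex - 1 + 1 = Nat.find hex by omega]
      exact hsp.2
    obtain ⟨i, hiu, him, hiL⟩ : ∃ i, i ≤ u ∧ (u + 2 ≤ i + m ∨ (u + 1 ≤ i + m ∧ q (u + 1) ≠ p)) ∧
        i + m < L := by
      by_cases heq : q (u + 1) = p
      · have : u + 1 < L - 1 := hlt_of _ _ huL (by omega)
        exact ⟨min u (L - 1 - m), by omega, by omega, by omega⟩
      · exact ⟨min u (L - 1 - m), by omega, Or.inr ⟨by omega, heq⟩, by omega⟩
    refine ⟨q i, q (i + m), ?_, ?_, (hhook _ hiL).1, (hhook _ (by omega)).2, (hhook _ hiL).2,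
      hmemH i hiL⟩
    · have := hle i u hiu (by omega)
      omega
    · rcases him with hi | ⟨hi, hne⟩
      · have := hmono (u + 1) (i + m) (by omega) hiL
        omega
      · have := hle (u + 1) (i + m) hi hiL
        omega
  · rw [hH, Finset.card_image_of_injOn, Finset.card_range]
    · omega
    · intro i hi j hj hij
      simp only [Finset.coe_range, Set.mem_Iio, Prod.mk.injEq] at hi hj hij
      by_contra hne
      rcases Nat.lt_or_gt_of_ne hne with h1 | h1
      · have := hmono i j h1 (by omega); omega
      · have := hmono j i h1 (by omega); omega

open Classical in
theorem exists_hooks (h : IsDFSCode n par) :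
    ∃ H, IsGoodHookSet n par H ∧
      H.card = (((Finset.range n).filter (IsTwoPos n par)).card + 3) / 2 := by
  by_cases h1 : ((Finset.range n).filter (IsTwoPos n par)).card = 1
  · obtain ⟨H, hH, hc⟩ := h.exists_hooks_of_one h1
    exact ⟨H, hH, by rw [hc, h1]⟩
  · exact h.exists_hooks_of_ne_one h1

end IsDFSCode


/-! ### Existence of the depth-first order -/

/-- The parent map of the tree rooted at `a`: the last vertex but one on the path from `a`. -/
theorem exists_parent {V : Type*} (T : SimpleGraph V) (hT : T.IsTree) (a : V) :
    ∃ p : V → V, (∀ v, v ≠ a → T.Adj v (p v)) ∧ p a = a ∧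
      ∀ x y, T.Adj x y → p x = y ∨ p y = x := by
  choose P hP _ using hT.existsUnique_path a
  refine ⟨fun v => (P v).penultimate, ?_, ?_, ?_⟩
  · intro v hv
    exact ((P v).adj_penultimate (SimpleGraph.Walk.not_nil_of_ne hv.symm)).symm
  · have : P a = SimpleGraph.Walk.nil := by
      have := hP a
      simpa using this
    simp [this]
  · intro x y hxy
    by_cases hx : x ∈ (P y).support
    · exact Or.inr (hT.isAcyclic.eq_penultimate_of_adj_end (hP y) hxy.symm hx).symm
    · have hy := hT.isAcyclic.mem_support_of_ne_mem_support_of_adj_of_isPath (hP x) (hP y) hxy hx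
      exact Or.inl (hT.isAcyclic.eq_penultimate_of_adj_end (hP x) hxy hy).symm

/-- Labels whose order is a depth-first preorder for the parent map `p`. They are built on growing
subtrees `S` containing the root: a new vertex `v` is inserted immediately after its parent. -/
theorem exists_height {V : Type*} [Fintype V] (T : SimpleGraph V) (hT : T.IsTree) (a : V)
    (p : V → V) (hpa : p a = a) (hp : ∀ x y, T.Adj x y → p x = y ∨ p y = x) :
    ∃ f : V → ℕ, Function.Injective f ∧ (∀ v, v ≠ a → f (p v) < f v) ∧
      ∀ u v, u ≠ a → v ≠ a → f (p v) < f u → f u ≤ f v → f (p v) ≤ f (p u) := by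
  classical
  have key : ∀ k, 1 ≤ k → k ≤ Fintype.card V → ∃ S : Finset V, S.card = k ∧ a ∈ S ∧
      (∀ v ∈ S, p v ∈ S) ∧ ∃ f : V → ℕ, (∀ u ∈ S, ∀ v ∈ S, f u = f v → u = v) ∧
      (∀ v ∈ S, v ≠ a → f (p v) < f v) ∧
      ∀ u ∈ S, ∀ v ∈ S, u ≠ a → v ≠ a → f (p v) < f u → f u ≤ f v → f (p v) ≤ f (p u) := by
    intro k hk
    induction k, hk using Nat.le_induction with
    | base =>
      intro _
      refine ⟨{a}, by simp, by simp, by simp [hpa], fun _ => 0, by simp, by simp, by simp⟩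
    | succ k hk ih =>
      intro hkn
      obtain ⟨S, hSk, haS, hcl, f, hinj, hlt, hnest⟩ := ih (by omega)
      obtain ⟨b, hb⟩ : ∃ b, b ∉ S := by
        by_contra hcon
        push Not at hcon
        have : S = Finset.univ := by ext x; simp [hcon x]
        rw [this, Finset.card_univ] at hSk
        omega
      obtain ⟨w⟩ := hT.connected.preconnected a b
      obtain ⟨d, -, hdu, hdv⟩ := w.exists_boundary_dart (S : Set V) (by simpa using haS)
        (by simpa using hb)
      obtain ⟨⟨u, v⟩, huv⟩ := d
      simp only [Finset.mem_coe] at hdu hdv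
      have hpv : p v = u := by
        rcases hp u v huv with h1 | h1
        · exact absurd (h1 ▸ hcl u hdu) hdv
        · exact h1
      have hva : v ≠ a := by rintro rfl; exact hdv haS
      -- doubling the labels makes room for `v` right after `u`
      have hf : ∀ x ∈ S, (if x = v then 2 * f u + 1 else 2 * f x) = 2 * f x := by
        intro x hx
        rw [if_neg]
        rintro rfl
        exact hdv hx
      refine ⟨insert v S, by rw [Finset.card_insert_of_notMem hdv, hSk], by simp [haS], ?_,
        fun x => if x = v then 2 * f u + 1 else 2 * f x, ?_, ?_, ?_⟩
      · intro x hx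
        rcases Finset.mem_insert.1 hx with rfl | hx
        · rw [hpv]; exact Finset.mem_insert_of_mem hdu
        · exact Finset.mem_insert_of_mem (hcl x hx)
      · intro x hx y hy hxy
        rcases Finset.mem_insert.1 hx with rfl | hxS <;>
          rcases Finset.mem_insert.1 hy with rfl | hyS
        · rfl
        · simp only [hf y hyS, if_true] at hxy; omega
        · simp only [hf x hxS, if_true] at hxy; omega
        · simp only [hf x hxS, hf y hyS] at hxy
          exact hinj x hxS y hyS (by omega)
      · intro x hx hxa
        rcases Finset.mem_insert.1 hx with rfl | hx
        · simp only [hpv, hf u hdu, if_true]; omega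
        · simp only [hf x hx, hf _ (hcl x hx)]
          have := hlt x hx hxa
          omega
      · intro x hx y hy hxa hya
        rcases Finset.mem_insert.1 hx with rfl | hxS <;>
          rcases Finset.mem_insert.1 hy with rfl | hyS
        · intros; exact le_rfl
        · simp only [hpv, hf u hdu, hf y hyS, hf _ (hcl y hyS), if_true]; omega
        · simp only [hpv, hf u hdu, hf x hxS, hf _ (hcl x hxS), if_true]; omega
        · simp only [hf y hyS, hf _ (hcl y hyS), hf x hxS, hf _ (hcl x hxS)]
          have := hnest x hxS y hyS hxa hya
          omega
  have hcard : 1 ≤ Fintype.card V := Fintype.card_pos_iff.2 ⟨a⟩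
  obtain ⟨S, hSk, -, -, f, h1, h2, h3⟩ := key _ hcard le_rfl
  have hS : ∀ x, x ∈ S := fun x => by
    rw [Finset.card_eq_iff_eq_univ] at hSk
    simp [hSk]
  exact ⟨f, fun u v => h1 u (hS u) v (hS v), fun v => h2 v (hS v),
    fun u v => h3 u (hS u) v (hS v)⟩

/-- A numbering of the vertices of `T` by the positions of a depth-first order: `pos` and `vtx` are
mutually inverse between `V` and `{0, …, card V - 1}`, and the edges of `T` join each position other
than `0` to its parent. -/
structure IsDFSNumbering {V : Type*} [Fintype V] (T : SimpleGraph V) (pos : V → ℕ) (vtx : ℕ → V)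
    (par : ℕ → ℕ) : Prop where
  code : IsDFSCode (Fintype.card V) par
  pos_lt : ∀ v, pos v < Fintype.card V
  vtx_pos : ∀ v, vtx (pos v) = v
  pos_vtx : ∀ i, i < Fintype.card V → pos (vtx i) = i
  adj_iff : ∀ u v, T.Adj u v ↔
    (0 < pos v ∧ par (pos v) = pos u) ∨ (0 < pos u ∧ par (pos u) = pos v)

theorem exists_numbering {V : Type*} [Fintype V] (T : SimpleGraph V) (hT : T.IsTree)
    (hn : 4 ≤ Fintype.card V) : ∃ pos vtx par, IsDFSNumbering T pos vtx par := by
  classical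
  have : Nontrivial V := Fintype.one_lt_card_iff_nontrivial.1 (by omega)
  obtain ⟨a, ha⟩ := hT.exists_vert_degree_one_of_nontrivial
  obtain ⟨b, hb, hbu⟩ := SimpleGraph.degree_eq_one_iff_existsUnique_adj.1 ha
  obtain ⟨p, hp1, hp2, hp3⟩ := exists_parent T hT a
  obtain ⟨f, hfi, hf1, hf2⟩ := exists_height T hT a p hp2 hp3
  -- the position of a vertex is the rank of its label
  obtain ⟨pos, hpos⟩ : ∃ pos : V → ℕ, ∀ v, pos v = (Finset.univ.filter (f · < f v)).card :=
    ⟨_, fun _ => rfl⟩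
  have hlt : ∀ u v, f u < f v → pos u < pos v := by
    intro u v huv
    rw [hpos, hpos]
    refine Finset.card_lt_card ⟨fun w hw => ?_, fun hcon => ?_⟩
    · simp only [Finset.mem_filter, Finset.mem_univ, true_and] at hw ⊢
      omega
    · have := hcon (show u ∈ _ by simpa using huv)
      simp at this
  have hle : ∀ u v, f u ≤ f v → pos u ≤ pos v := by
    intro u v huv
    rcases huv.eq_or_lt with h1 | h1
    · rw [hfi h1]
    · exact (hlt u v h1).le
  have hlt' : ∀ u v, pos u < pos v → f u < f v := fun u v h => by
    by_contra hcon
    have := hle v u (by omega)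
    omega
  have hle' : ∀ u v, pos u ≤ pos v → f u ≤ f v := fun u v h => by
    by_contra hcon
    have := hlt v u (by omega)
    omega
  have hinj : Function.Injective pos := fun u v huv => by
    have h1 := hle' u v huv.le
    have h2 := hle' v u huv.ge
    exact hfi (le_antisymm h1 h2)
  have hposn : ∀ v, pos v < Fintype.card V := by
    intro v
    rw [hpos, ← Finset.card_univ]
    refine Finset.card_lt_card ⟨Finset.subset_univ _, fun hcon => ?_⟩
    have := hcon (Finset.mem_univ v)
    simp at this
  have hbij : Function.Bijective (fun v => (⟨pos v, hposn v⟩ : Fin (Fintype.card V))) := by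
    rw [Fintype.bijective_iff_injective_and_card]
    refine ⟨fun u v huv => hinj (by simpa using huv), by simp⟩
  have hsurj : ∀ i, ∃ v, i < Fintype.card V → pos v = i := by
    intro i
    by_cases hi : i < Fintype.card V
    · obtain ⟨v, hv⟩ := hbij.2 ⟨i, hi⟩
      exact ⟨v, fun _ => by simpa using hv⟩
    · exact ⟨a, fun h => absurd h hi⟩
  choose vtx hvtx using hsurj
  have hvp : ∀ v, vtx (pos v) = v := fun v => hinj (hvtx _ (hposn v))
  have ha0 : pos a = 0 := by
    by_contra hne
    have h0 := hvtx 0 (by omega)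
    have hva : vtx 0 ≠ a := by
      intro h1
      rw [h1] at h0
      exact hne h0
    have := hlt _ _ (hf1 _ hva)
    omega
  have hne_a : ∀ v, v ≠ a ↔ 0 < pos v := fun v => by
    rw [Nat.pos_iff_ne_zero, ← ha0]
    exact hinj.ne_iff.symm
  have hpl : ∀ i, 0 < i → i < Fintype.card V → pos (p (vtx i)) < i := by
    intro i h0 hi
    have h1 := hvtx i hi
    have := hlt _ _ (hf1 (vtx i) ((hne_a _).2 (by omega)))
    omega
  refine ⟨pos, vtx, fun i => pos (p (vtx i)), ⟨⟨hn, hpl, ?_, ?_⟩, hposn, hvp, hvtx, ?_⟩⟩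
  · intro i j hi hj hji hij
    have h1 := hvtx i (by omega)
    have h2 := hvtx j hj
    exact hle _ _ (hf2 (vtx i) (vtx j) ((hne_a _).2 (by omega)) ((hne_a _).2 (by omega))
      (hlt' _ _ (by omega)) (hle' _ _ (by omega)))
  · -- the root has a single neighbour, which is therefore at position `1`
    intro i hi hin h0
    have hchild : ∀ k, 0 < k → k < Fintype.card V → pos (p (vtx k)) = 0 → vtx k = b := by
      intro k hk hkn hpk
      have h1 := hvtx k hkn
      have h2 : p (vtx k) = a := hinj (by omega)
      have h3 := hp1 (vtx k) ((hne_a _).2 (by omega))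
      rw [h2] at h3
      exact hbu _ h3.symm
    have e1 := hchild i (by omega) hin h0
    have e2 := hchild 1 (by omega) (by omega) (by have := hpl 1 (by omega) (by omega); omega)
    have h1 := hvtx i hin
    have h2 := hvtx 1 (by omega)
    rw [e1] at h1
    rw [e2] at h2
    omega
  · intro u v
    simp only [hvp, ← hne_a]
    constructor
    · intro huv
      rcases hp3 u v huv with h1 | h1
      · refine Or.inr ⟨?_, by rw [h1]⟩
        rintro rfl
        exact huv.ne (hp2.symm.trans h1)
      · refine Or.inl ⟨?_, by rw [h1]⟩
        rintro rfl
        exact huv.ne (h1.symm.trans hp2)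
    · rintro (⟨h1, h2⟩ | ⟨h1, h2⟩)
      · have := hp1 v h1
        rw [hinj h2] at this
        exact this.symm
      · have := hp1 u h1
        rw [hinj h2] at this
        exact this


/-! ### From positions back to the graph -/

namespace IsDFSNumbering

variable {V : Type*} [Fintype V] {T : SimpleGraph V} {pos : V → ℕ} {vtx : ℕ → V}

theorem pos_injective (hN : IsDFSNumbering T pos vtx par) : Function.Injective pos :=
  Function.LeftInverse.injective hN.vtx_pos

theorem adj_parent (hN : IsDFSNumbering T pos vtx par) {i : ℕ} (h0 : 0 < i)
    (hi : i < Fintype.card V) : T.Adj (vtx i) (vtx (par i)) := by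
  have := hN.code.par_lt i h0 hi
  rw [hN.adj_iff, hN.pos_vtx i hi, hN.pos_vtx (par i) (by omega)]
  exact Or.inr ⟨h0, rfl⟩

theorem mem_neighborSet (hN : IsDFSNumbering T pos vtx par) (v w : V) :
    w ∈ T.neighborSet v ↔
      (0 < pos w ∧ par (pos w) = pos v) ∨ (0 < pos v ∧ par (pos v) = pos w) := by
  rw [SimpleGraph.mem_neighborSet, hN.adj_iff]

theorem degN_eq_one_iff (hN : IsDFSNumbering T pos vtx par) (v : V) :
    degN T v = 1 ↔ IsLeafPos (Fintype.card V) par (pos v) := by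
  have h4 := hN.code.four_le
  have hv := hN.pos_lt v
  unfold degN
  constructor
  · intro h1
    obtain ⟨w, hw⟩ := Set.ncard_eq_one.1 h1
    by_contra hl
    obtain ⟨h0, hs, hp⟩ := hN.code.succ_of_not_leaf hv hl
    have hpl := hN.code.par_lt _ h0 hv
    have e1 : vtx (pos v + 1) ∈ T.neighborSet v := by
      rw [hN.mem_neighborSet, hN.pos_vtx _ hs]
      exact Or.inl ⟨by omega, hp⟩
    have e2 : vtx (par (pos v)) ∈ T.neighborSet v := by
      rw [hN.mem_neighborSet, hN.pos_vtx _ (by omega)]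
      exact Or.inr ⟨h0, rfl⟩
    rw [hw, Set.mem_singleton_iff] at e1 e2
    have e3 := congrArg pos (e1.trans e2.symm)
    rw [hN.pos_vtx _ hs, hN.pos_vtx _ (by omega)] at e3
    omega
  · intro hl
    rw [Set.ncard_eq_one]
    rcases hl with h0 | ⟨-, hl⟩
    · refine ⟨vtx 1, Set.ext fun w => ?_⟩
      rw [hN.mem_neighborSet, Set.mem_singleton_iff, h0]
      constructor
      · rintro (⟨h1, h2⟩ | ⟨h1, h2⟩)
        · have h3 : pos w = 1 := by
            by_contra hne
            exact hN.code.root _ (by omega) (hN.pos_lt w) h2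
          rw [← h3, hN.vtx_pos]
        · omega
      · rintro rfl
        rw [hN.pos_vtx 1 (by omega)]
        exact Or.inl ⟨by omega, hN.code.par_one⟩
    · have h0 : 0 < pos v := by
        by_contra h0
        exact hl 1 (by omega) (by omega) (by rw [hN.code.par_one]; omega)
      have hpl := hN.code.par_lt _ h0 hv
      refine ⟨vtx (par (pos v)), Set.ext fun w => ?_⟩
      rw [hN.mem_neighborSet, Set.mem_singleton_iff]
      constructor
      · rintro (⟨h1, h2⟩ | ⟨h1, h2⟩)
        · exact absurd h2 (hl _ h1 (hN.pos_lt w))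
        · rw [h2, hN.vtx_pos]
      · rintro rfl
        rw [hN.pos_vtx _ (by omega)]
        exact Or.inr ⟨h0, rfl⟩

theorem degN_eq_two_iff (hN : IsDFSNumbering T pos vtx par) (v : V) :
    degN T v = 2 ↔ IsTwoPos (Fintype.card V) par (pos v) := by
  have h4 := hN.code.four_le
  have hv := hN.pos_lt v
  constructor
  · intro h2
    have hl : ¬ IsLeafPos (Fintype.card V) par (pos v) := by
      rw [← hN.degN_eq_one_iff]; omega
    obtain ⟨h0, hs, hp⟩ := hN.code.succ_of_not_leaf hv hl
    have hpl := hN.code.par_lt _ h0 hv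
    refine ⟨h0, hs, hp, fun j hj0 hj hpj => ?_⟩
    by_contra hne
    have hjv := hN.code.par_lt j hj0 hj
    have e1 : vtx (pos v + 1) ∈ T.neighborSet v := by
      rw [hN.mem_neighborSet, hN.pos_vtx _ hs]
      exact Or.inl ⟨by omega, hp⟩
    have e2 : vtx (par (pos v)) ∈ T.neighborSet v := by
      rw [hN.mem_neighborSet, hN.pos_vtx _ (by omega)]
      exact Or.inr ⟨h0, rfl⟩
    have e3 : vtx j ∈ T.neighborSet v := by
      rw [hN.mem_neighborSet, hN.pos_vtx _ hj]
      exact Or.inl ⟨by omega, hpj⟩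
    unfold degN at h2
    obtain ⟨x, y, -, hxy⟩ := Set.ncard_eq_two.1 h2
    have p1 := hN.pos_vtx _ hs
    have p2 := hN.pos_vtx (par (pos v)) (by omega)
    have p3 := hN.pos_vtx j hj
    have d12 : vtx (pos v + 1) ≠ vtx (par (pos v)) := fun he => by rw [he] at p1; omega
    have d13 : vtx (pos v + 1) ≠ vtx j := fun he => by rw [he] at p1; omega
    have d23 : vtx (par (pos v)) ≠ vtx j := fun he => by rw [he] at p2; omega
    rw [hxy, Set.mem_insert_iff, Set.mem_singleton_iff] at e1 e2 e3
    grind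
  · rintro ⟨h0, hs, hp, hu⟩
    have hpl := hN.code.par_lt _ h0 hv
    have p1 := hN.pos_vtx _ hs
    have p2 := hN.pos_vtx (par (pos v)) (by omega)
    unfold degN
    rw [Set.ncard_eq_two]
    refine ⟨vtx (pos v + 1), vtx (par (pos v)), fun he => by rw [he] at p1; omega,
      Set.ext fun w => ?_⟩
    rw [hN.mem_neighborSet, Set.mem_insert_iff, Set.mem_singleton_iff]
    constructor
    · rintro (⟨h1, h2⟩ | ⟨h1, h2⟩)
      · left; rw [← hu _ h1 (hN.pos_lt w) h2, hN.vtx_pos]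
      · right; rw [h2, hN.vtx_pos]
    · rintro (rfl | rfl)
      · rw [p1]; exact Or.inl ⟨by omega, hp⟩
      · rw [p2]; exact Or.inr ⟨h0, rfl⟩

theorem card_filter_eq (hN : IsDFSNumbering T pos vtx par) (A : V → Prop) (B : ℕ → Prop)
    [DecidablePred A] [DecidablePred B]
    (hAB : ∀ v, A v ↔ B (pos v)) :
    (Finset.univ.filter A).card = ((Finset.range (Fintype.card V)).filter B).card := by
  refine Finset.card_nbij' pos vtx ?_ ?_ ?_ ?_
  · intro v hv
    simpa [hN.pos_lt, hAB] using hv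
  · intro i hi
    simp only [Finset.coe_filter, Finset.mem_range, Set.mem_ofPred_eq] at hi
    simpa [hAB, hN.pos_vtx i hi.1] using hi.2
  · intro v _
    exact hN.vtx_pos v
  · intro i hi
    simp only [Finset.coe_filter, Finset.mem_range, Set.mem_ofPred_eq] at hi
    exact hN.pos_vtx i hi.1

/-- A graph containing the tree, the spine edges and the hook edges is 3-connected. For `S` of at most
two vertices, reachability from a fixed vertex outside `S` is a cut colouring. -/
theorem threeConnected (hN : IsDFSNumbering T pos vtx par) (G : SimpleGraph V) (hTG : T ≤ G)
    (hspine : ∀ x y, IsLeafPos (Fintype.card V) par x → IsLeafPos (Fintype.card V) par y →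
      x < y → (∀ z, x < z → z < y → ¬ IsLeafPos (Fintype.card V) par z) → G.Adj (vtx x) (vtx y))
    (hhook : ∀ x y, R x y → x < Fintype.card V ∧ y < Fintype.card V ∧ G.Adj (vtx x) (vtx y))
    (hR : LeavesRuns (Fintype.card V) par R) (hQ : Straddles (Fintype.card V) par R) :
    ThreeConnected G := by
  classical
  intro S hS
  have h4 := hN.code.four_le
  rw [SimpleGraph.connected_iff]
  constructor
  · rintro ⟨u, hu⟩ ⟨v, hv⟩
    have huS : u ∉ S := by simpa using hu
    have hvS : v ∉ S := by simpa using hv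
    -- enlarge `S` to a set of exactly two vertices which still avoids `u` and `v`
    obtain ⟨S', hSS', hS'uv, hS'⟩ : ∃ S' : Finset V, S ⊆ S' ∧ S' ⊆ ({u, v} : Finset V)ᶜ ∧
        S'.card = 2 := by
      refine Finset.exists_subsuperset_card_eq ?_ hS ?_
      · intro x hx
        simp only [Finset.mem_compl, Finset.mem_insert, Finset.mem_singleton, not_or]
        exact ⟨fun h => huS (h ▸ hx), fun h => hvS (h ▸ hx)⟩
      · rw [Finset.card_compl]
        have : ({u, v} : Finset V).card ≤ 2 := Finset.card_le_two
        omega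
    have huS' : u ∉ S' := fun h => by simpa using hS'uv h
    have hvS' : v ∉ S' := fun h => by simpa using hS'uv h
    obtain ⟨x, y, -, rfl⟩ := Finset.card_eq_two.1 hS'
    have hDmem : ∀ i, i < Fintype.card V → ¬ (i = pos x ∨ i = pos y) → vtx i ∈ ((S : Set V)ᶜ) := by
      intro i hi hD hmem
      have := hSS' (Finset.mem_coe.1 hmem)
      simp only [Finset.mem_insert, Finset.mem_singleton] at this
      have hpi := hN.pos_vtx i hi
      rcases this with h1 | h1 <;> rw [h1] at hpi <;> omega
    obtain ⟨c, hc⟩ : ∃ c : ℕ → Prop, ∀ i, c i ↔ ∃ hw : vtx i ∈ ((S : Set V)ᶜ),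
      (G.induce ((S : Set V)ᶜ)).Reachable ⟨u, hu⟩ ⟨vtx i, hw⟩ := ⟨_, fun _ => Iff.rfl⟩
    have hstep : ∀ i j, i < Fintype.card V → j < Fintype.card V → ¬ (i = pos x ∨ i = pos y) →
        ¬ (j = pos x ∨ j = pos y) → G.Adj (vtx i) (vtx j) → c i → c j := by
      intro i j hi hj hiD hjD hij hci
      rw [hc] at hci ⊢
      obtain ⟨hw, hr⟩ := hci
      refine ⟨hDmem j hj hjD, hr.trans (SimpleGraph.Adj.reachable ?_)⟩
      simpa using hij
    have hstep' : ∀ i j, i < Fintype.card V → j < Fintype.card V → ¬ (i = pos x ∨ i = pos y) →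
        ¬ (j = pos x ∨ j = pos y) → G.Adj (vtx i) (vtx j) → (c i ↔ c j) :=
      fun i j hi hj hiD hjD hij =>
        ⟨hstep i j hi hj hiD hjD hij, hstep j i hj hi hjD hiD hij.symm⟩
    have hleaf_lt : ∀ i, IsLeafPos (Fintype.card V) par i → i < Fintype.card V := by
      rintro i (h1 | h1)
      · omega
      · exact h1.1
    have hcol : IsCutColoring (Fintype.card V) par R (pos x) (pos y)
        (fun i => i = pos x ∨ i = pos y) c := by
      refine ⟨fun _ => Iff.rfl, ?_, ?_, ?_⟩
      · intro j h0 hj hjD hpD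
        have := hN.code.par_lt j h0 hj
        exact hstep' _ _ hj (by omega) hjD hpD (hTG (hN.adj_parent h0 hj))
      · intro i j hi hj hij hz hiD hjD
        exact hstep' _ _ (hleaf_lt i hi) (hleaf_lt j hj) hiD hjD (hspine i j hi hj hij hz)
      · intro i j hij hiD hjD
        obtain ⟨h1, h2, h3⟩ := hhook i j hij
        exact hstep' _ _ h1 h2 hiD hjD h3
    obtain ⟨X, hX⟩ := hN.code.cutColoring_const hR hQ hcol (hN.pos_lt x) (hN.pos_lt y)
    have havoid : ∀ w, w ∉ ({x, y} : Finset V) → ¬ (pos w = pos x ∨ pos w = pos y) := by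
      intro w hw
      simpa [hN.pos_injective.eq_iff] using hw
    have hcu : c (pos u) := by
      rw [hc]
      simp only [hN.vtx_pos]
      exact ⟨hu, SimpleGraph.Reachable.refl _⟩
    have hcv : c (pos v) := (hX _ (hN.pos_lt v) (havoid v hvS')).2
      ((hX _ (hN.pos_lt u) (havoid u huS')).1 hcu)
    rw [hc] at hcv
    simp only [hN.vtx_pos] at hcv
    exact hcv.2
  · have : ∃ v, v ∉ S := by
      by_contra hcon
      push Not at hcon
      have : S = Finset.univ := by ext x; simp [hcon x]
      rw [this, Finset.card_univ] at hS
      omega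
    obtain ⟨v, hv⟩ := this
    exact ⟨v, by simpa using hv⟩

end IsDFSNumbering

/-- For every tree `T` on `n ≥ 4` vertices there is an augmenting set of exactly
`⌈(2·l₁ + l₂)/2⌉` non-edges whose addition makes the graph 3-vertex-connected. -/
theorem tree_augmentation_three_connected
    {V : Type*} [Fintype V] (T : SimpleGraph V) (hT : T.IsTree)
    (hn : 4 ≤ Fintype.card V) :
    ∃ F : Finset (Sym2 V),
      (∀ e ∈ F, ¬ e.IsDiag ∧ e ∉ T.edgeSet) ∧
      F.card = (2 * (Finset.univ.filter (fun v => degN T v = 1)).card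
          + (Finset.univ.filter (fun v => degN T v = 2)).card + 1) / 2 ∧
      ThreeConnected (T ⊔ SimpleGraph.fromEdgeSet (F : Set (Sym2 V))) := by
  classical
  obtain ⟨pos, vtx, par, hN⟩ := exists_numbering T hT hn
  have hcode := hN.code
  obtain ⟨n, hnV⟩ : ∃ n, n = Fintype.card V := ⟨_, rfl⟩
  have hleaf_lt : ∀ i, IsLeafPos n par i → i < n := by
    rintro i (h1 | h1)
    · omega
    · exact h1.1
  have hl1 := hN.card_filter_eq (fun v => degN T v = 1) _ hN.degN_eq_one_iff
  have hl2 := hN.card_filter_eq (fun v => degN T v = 2) _ hN.degN_eq_two_iff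
  obtain ⟨H, ⟨hH, hruns, hstrad⟩, hHcard⟩ := hcode.exists_hooks
  obtain ⟨P, hP, hPcard⟩ := exists_consecutive_pairs
    ((Finset.range (Fintype.card V)).filter (IsLeafPos (Fintype.card V) par))
    ⟨0, by simp only [Finset.mem_filter, Finset.mem_range]; exact ⟨by omega, Or.inl rfl⟩⟩
  have hpv := hN.pos_vtx
  rw [← hnV] at hcode hl1 hl2 hH hruns hstrad hHcard hP hPcard hpv
  have hP' : ∀ x y, (x, y) ∈ P ↔ IsLeafPos n par x ∧ IsLeafPos n par y ∧ x < y ∧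
      ∀ z, x < z → z < y → ¬ IsLeafPos n par z := by
    intro x y
    rw [hP]
    simp only [Finset.mem_filter, Finset.mem_range]
    constructor
    · rintro ⟨h1, h2, h3, h4⟩
      exact ⟨h1.2, h2.2, h3, fun z hz hz' hl => h4 z hz hz' ⟨hleaf_lt z hl, hl⟩⟩
    · rintro ⟨h1, h2, h3, h4⟩
      exact ⟨⟨hleaf_lt x h1, h1⟩, ⟨hleaf_lt y h2, h2⟩, h3, fun z hz hz' hl => h4 z hz hz' hl.2⟩
  have hdisj : Disjoint P H := by
    rw [Finset.disjoint_left]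
    rintro ⟨x, y⟩ h1 h2
    obtain ⟨a1, a2, -, a4⟩ := (hP' x y).1 h1
    exact (hH x y h2).2.2.2 ⟨a1, a2, a4⟩
  have hE : ∀ x y, (x, y) ∈ P ∪ H → x < y ∧ y < n ∧ par y ≠ x := by
    intro x y hxy
    rcases Finset.mem_union.1 hxy with h1 | h1
    · obtain ⟨a1, a2, a3, -⟩ := (hP' x y).1 h1
      have hy := hleaf_lt y a2
      refine ⟨a3, hy, fun hp => ?_⟩
      rcases a1 with rfl | a1
      · rcases Nat.lt_or_ge 1 y with h2 | h2
        · exact hcode.root y h2 hy hp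
        · obtain rfl : y = 1 := by omega
          -- position `1` is not a leaf, since position `2` hangs below it
          have b1 := hcode.par_lt 2 (by omega) (by omega)
          have b2 := hcode.root 2 (by omega) (by omega)
          rcases a2 with a2 | a2
          · omega
          · exact a2.2 2 (by omega) (by omega) (by omega)
      · exact a1.2 y (by omega) hy hp
    · exact ⟨(hH x y h1).1, (hH x y h1).2.1, (hH x y h1).2.2.1⟩
  have hmemF : ∀ x y, (x, y) ∈ P ∪ H →
      (T ⊔ SimpleGraph.fromEdgeSet
        (((P ∪ H).image fun q => s(vtx q.1, vtx q.2) : Finset (Sym2 V)) : Set (Sym2 V))).Adj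
        (vtx x) (vtx y) := by
    intro x y hxy
    obtain ⟨h1, h2, -⟩ := hE x y hxy
    refine Or.inr ((SimpleGraph.fromEdgeSet_adj _).2 ⟨?_, fun he => ?_⟩)
    · exact Finset.mem_coe.2 (Finset.mem_image.2 ⟨(x, y), hxy, rfl⟩)
    · have := congrArg pos he
      rw [hpv x (by omega), hpv y h2] at this
      omega
  refine ⟨(P ∪ H).image fun q => s(vtx q.1, vtx q.2), ?_, ?_, ?_⟩
  · intro e he
    obtain ⟨⟨x, y⟩, hxy, rfl⟩ := Finset.mem_image.1 he
    obtain ⟨h1, h2, h3⟩ := hE x y hxy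
    have px := hpv x (by omega)
    have py := hpv y h2
    constructor
    · rw [Sym2.mk_isDiag_iff]
      intro he
      have : pos (vtx x) = pos (vtx y) := congrArg pos he
      omega
    · rw [SimpleGraph.mem_edgeSet, hN.adj_iff, px, py]
      rintro (⟨-, h4⟩ | ⟨h4, h5⟩)
      · exact h3 h4
      · have := hcode.par_lt x h4 (by omega)
        omega
  -- the counts are `l₁ - 1` spine edges and `⌈(l₂ + 2) / 2⌉` hook edges
  · have hcard : (P ∪ H).card = (2 * ((Finset.range n).filter (IsLeafPos n par)).card +
        ((Finset.range n).filter (IsTwoPos n par)).card + 1) / 2 := by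
      rw [Finset.card_union_of_disjoint hdisj]
      omega
    rw [Finset.card_image_of_injOn, hcard, hl1, hl2]
    · rintro ⟨x, y⟩ hxy ⟨x', y'⟩ hxy' heq
      obtain ⟨h1, h2, -⟩ := hE x y (Finset.mem_coe.1 hxy)
      obtain ⟨h1', h2', -⟩ := hE x' y' (Finset.mem_coe.1 hxy')
      have px := hpv x (by omega)
      have py := hpv y h2
      have px' := hpv x' (by omega)
      have py' := hpv y' h2'
      simp only [Sym2.eq_iff] at heq
      rcases heq with ⟨e1, e2⟩ | ⟨e1, e2⟩ <;> have f1 := congrArg pos e1 <;>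
        have f2 := congrArg pos e2
      · exact Prod.ext (by omega) (by omega)
      · omega
  · rw [hnV] at hruns hstrad
    refine hN.threeConnected (R := fun x y => (x, y) ∈ H) _ le_sup_left ?_ ?_ hruns hstrad
    · intro x y hx hy hxy hz
      rw [← hnV] at hx hy hz
      exact hmemF x y (Finset.mem_union_left _ ((hP' x y).2 ⟨hx, hy, hxy, hz⟩))
    · intro x y hxy
      have hxy' := Finset.mem_union_right P hxy
      obtain ⟨h1, h2, -⟩ := hE x y hxy'
      exact ⟨by omega, by omega, hmemF x y hxy'⟩
end
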